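/- arXiv:2304.00621 — 3 statements merged into one kernel-verified Lean document; each statement's English description precedes it below -/
import Mathlib

section
/- Let n≥1, β∈(0,∞)^n and α≥0. For every f∈VMO^{β,α}(ℝ^n) and every ε>0 there exists g∈C_c^∞(ℝ^n) such that ‖f−g‖_{BMO^{β,α}}≤ε; that is, VMO^{β,α}(ℝ^n) is contained in the closure of C_c^∞(ℝ^n) with respect to the seminorm ‖·‖_{BMO^{β,α}}. -/
/-!
Smooth compactly supported functions approximate `f ∈ VMO^{β,α}`; the argument depends on whether
`α` lies below `γ := min β`.

If `α < γ`, averages of `f` over intersecting cubes of sizes `ℓ ≤ R` differ by a multiple of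
`ℓ ^ α (R / ℓ) ^ γ` (`exists_cubeAvg_growth`). This compensates exactly for the Lipschitz decay
`(ℓ / R) ^ γ` of a cutoff at scale `R`, so the truncations `χ_R (f - ⟨f⟩)` are bounded in
`BMO^{β,α}` uniformly in `R` (`exists_osc_trunc_le`). Mollifying them gives `g ∈ C_c^∞` with
`‖f - g‖ ≤ C` for a fixed `C`, and with `O(f - g; Q)` as small as desired for all `Q` in a prescribed
compact family `{r ≤ ℓ(Q) ≤ R, ‖c_Q‖ ≤ ρ}` (`exists_local_approx`). On the other hand `f` and all
`C_c^∞` functions have small oscillation off some compact family (`VanishesOff`). Hence one can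
choose `g_1, g_2, …` successively, each `g_{N+1}` accurate on the family where the error of
`g_1 + ⋯ + g_N` is not small. Every cube is bad for at most one index, and the average of
`g_1, …, g_N` has error at most `C / N + ε / 2` (`exists_approx_of_lt`). This avoids any gluing of
the small, large and far-away regimes.

If `β i ≤ α` for some `i`, then `f` has zero oscillation and `g = 0` works (`osc_le_of_le`). Indeed
a mollification `F` of `f` inherits the small-scale condition, and a displacement of length
`s ^ β i` in the direction `e_i` changes averages over cubes of size `s` by `o(s ^ α)`. Covering a
distance `t` takes `t / s ^ β i` such steps, so `F` does not depend on the `i`-th coordinate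
(`eq_of_small_osc`). Its oscillation over a cube thus equals that over cubes moved to infinity,
where it vanishes in the limit.
-/

open MeasureTheory

noncomputable section

/-- A `β`-cube in `ℝⁿ`: an axis-parallel rectangle centred at `c` whose `i`-th side
has length `l ^ β i`, where `l > 0` is the sidelength parameter `ℓ(Q)`. -/
structure BetaCube (n : ℕ) (β : Fin n → ℝ) where
  c : EuclideanSpace ℝ (Fin n)
  l : ℝ
  l_pos : 0 < l

namespace BetaCube

variable {n : ℕ} {β : Fin n → ℝ}

/-- The underlying set of a `β`-cube. -/
def set (Q : BetaCube n β) : Set (EuclideanSpace ℝ (Fin n)) :=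
  {x | ∀ i, |x i - Q.c i| ≤ Q.l ^ (β i) / 2}

/-- Translation `Q + v` of a `β`-cube. -/
def translate (Q : BetaCube n β) (v : EuclideanSpace ℝ (Fin n)) : BetaCube n β :=
  ⟨Q.c + v, Q.l, Q.l_pos⟩

end BetaCube

/-- The average `⟨b⟩_Q` of `b` over a `β`-cube `Q`. -/
def cubeAvg {n : ℕ} {β : Fin n → ℝ} (Q : BetaCube n β)
    (b : EuclideanSpace ℝ (Fin n) → ℂ) : ℂ :=
  ⨍ x in Q.set, b x

/-- The fractional mean oscillation
`O^{β,α}(b;Q) = |Q|^{-α/|β|} · (1/|Q|) ∫_Q |b - ⟨b⟩_Q|`, where `|Q| = ℓ(Q)^{|β|}`. -/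
def osc {n : ℕ} (β : Fin n → ℝ) (α : ℝ) (b : EuclideanSpace ℝ (Fin n) → ℂ)
    (Q : BetaCube n β) : ℝ :=
  (Q.l ^ (∑ i, β i)) ^ (-(α / (∑ i, β i))) * ⨍ x in Q.set, ‖b x - cubeAvg Q b‖

/-- `b ∈ VMO^{β,α}(ℝⁿ)`: `b` is locally integrable, has finite `BMO^{β,α}` seminorm,
and satisfies the three vanishing conditions (small scales, large scales, far away). -/
def MemVMO {n : ℕ} (β : Fin n → ℝ) (α : ℝ) (b : EuclideanSpace ℝ (Fin n) → ℂ) : Prop :=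
  LocallyIntegrable b volume ∧
  (∃ M : ℝ, ∀ Q : BetaCube n β, osc β α b Q ≤ M) ∧
  (∀ ε > (0:ℝ), ∃ r > (0:ℝ), ∀ Q : BetaCube n β, Q.l ≤ r → osc β α b Q ≤ ε) ∧
  (∀ ε > (0:ℝ), ∃ r > (0:ℝ), ∀ Q : BetaCube n β, r ≤ Q.l → osc β α b Q ≤ ε) ∧
  (∀ Q : BetaCube n β, ∀ ε > (0:ℝ), ∃ R : ℝ, ∀ x : EuclideanSpace ℝ (Fin n),
    R ≤ ‖x‖ → osc β α b (Q.translate x) ≤ ε)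

/-! ### Averages and oscillations over `β`-cubes -/

section Aux

variable {n : ℕ} {β : Fin n → ℝ}

lemma BetaCube.set_eq_preimage (Q : BetaCube n β) :
    Q.set = (WithLp.ofLp) ⁻¹' (Set.univ.pi fun i =>
      Set.Icc (Q.c i - Q.l ^ (β i) / 2) (Q.c i + Q.l ^ (β i) / 2)) := by
  ext x
  simp only [BetaCube.set, Set.mem_ofPred_eq, Set.mem_preimage, Set.mem_univ_pi, Set.mem_Icc,
    abs_le]
  refine forall_congr' fun i => ?_
  constructor <;> rintro ⟨h1, h2⟩ <;> constructor <;> linarith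

lemma BetaCube.isCompact_set (Q : BetaCube n β) : IsCompact Q.set := by
  rw [Q.set_eq_preimage]
  exact (PiLp.homeomorph 2 (fun _ : Fin n => ℝ)).isCompact_preimage.2
    (isCompact_univ_pi fun i => isCompact_Icc)

lemma BetaCube.measurableSet_set (Q : BetaCube n β) : MeasurableSet Q.set :=
  Q.isCompact_set.isClosed.measurableSet

lemma BetaCube.volume_real_set (Q : BetaCube n β) :
    volume.real Q.set = Q.l ^ (∑ i, β i) := by
  have h : volume Q.set = ENNReal.ofReal (Q.l ^ (∑ i, β i)) := by
    rw [Q.set_eq_preimage, (PiLp.volume_preserving_ofLp (Fin n)).measure_preimage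
      (MeasurableSet.univ_pi fun i => measurableSet_Icc).nullMeasurableSet, volume_pi_pi]
    simp only [Real.volume_Icc]
    rw [← ENNReal.ofReal_prod_of_nonneg, Real.rpow_sum_of_pos Q.l_pos]
    · congr 1
      refine Finset.prod_congr rfl fun i _ => by ring
    · intro i _
      have := Real.rpow_pos_of_pos Q.l_pos (β i)
      linarith
  rw [Measure.real, h, ENNReal.toReal_ofReal (Real.rpow_nonneg Q.l_pos.le _)]

lemma BetaCube.rpow_pos (Q : BetaCube n β) (s : ℝ) : 0 < Q.l ^ s :=
  Real.rpow_pos_of_pos Q.l_pos s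

lemma BetaCube.integrableOn (Q : BetaCube n β) {b : EuclideanSpace ℝ (Fin n) → ℂ}
    (hb : LocallyIntegrable b volume) : IntegrableOn b Q.set :=
  hb.integrableOn_isCompact Q.isCompact_set

lemma BetaCube.integrableOn_const (Q : BetaCube n β) (a : ℂ) :
    IntegrableOn (fun _ : EuclideanSpace ℝ (Fin n) => a) Q.set :=
  Q.integrableOn (locallyIntegrable_const a)

lemma BetaCube.integrableOn_sub_const (Q : BetaCube n β) {b : EuclideanSpace ℝ (Fin n) → ℂ}
    (hb : LocallyIntegrable b volume) (a : ℂ) : IntegrableOn (fun x => ‖b x - a‖) Q.set :=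
  ((Q.integrableOn hb).sub (Q.integrableOn_const a)).norm

lemma BetaCube.center_mem (Q : BetaCube n β) : Q.c ∈ Q.set := by
  intro i
  have := Q.rpow_pos (β i)
  simp only [sub_self, abs_zero]
  linarith

lemma BetaCube.integral_const_eq (Q : BetaCube n β) (a : ℂ) :
    (Q.l ^ (∑ i, β i))⁻¹ • ∫ _ in Q.set, a = a := by
  rw [setIntegral_const, Q.volume_real_set, smul_smul, inv_mul_cancel₀ (Q.rpow_pos _).ne',
    one_smul]

lemma cubeAvg_eq (Q : BetaCube n β) (b : EuclideanSpace ℝ (Fin n) → ℂ) :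
    cubeAvg Q b = (Q.l ^ (∑ i, β i))⁻¹ • ∫ x in Q.set, b x := by
  rw [cubeAvg, setAverage_eq, Q.volume_real_set]

lemma cubeAvg_add (Q : BetaCube n β) {a b : EuclideanSpace ℝ (Fin n) → ℂ}
    (ha : LocallyIntegrable a volume) (hb : LocallyIntegrable b volume) :
    cubeAvg Q (a + b) = cubeAvg Q a + cubeAvg Q b := by
  simp only [cubeAvg_eq, Pi.add_apply]
  rw [integral_add (Q.integrableOn ha) (Q.integrableOn hb), smul_add]

lemma cubeAvg_smul (Q : BetaCube n β) (k : ℝ) (b : EuclideanSpace ℝ (Fin n) → ℂ) :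
    cubeAvg Q (k • b) = k • cubeAvg Q b := by
  simp only [cubeAvg_eq, Pi.smul_apply]
  rw [integral_smul, smul_comm]

lemma norm_cubeAvg_sub_le (Q : BetaCube n β) {b : EuclideanSpace ℝ (Fin n) → ℂ}
    (hb : LocallyIntegrable b volume) (a : ℂ) :
    ‖cubeAvg Q b - a‖ ≤ (Q.l ^ (∑ i, β i))⁻¹ * ∫ x in Q.set, ‖b x - a‖ := by
  have : cubeAvg Q b - a = (Q.l ^ (∑ i, β i))⁻¹ • ∫ x in Q.set, (b x - a) := by
    rw [integral_sub (Q.integrableOn hb) (Q.integrableOn_const a), smul_sub, Q.integral_const_eq,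
      cubeAvg_eq]
  rw [this, norm_smul, Real.norm_of_nonneg (inv_nonneg.2 (Q.rpow_pos _).le)]
  exact mul_le_mul_of_nonneg_left (norm_integral_le_integral_norm _)
    (inv_nonneg.2 (Q.rpow_pos _).le)

lemma osc_eq (hS : 0 < ∑ i, β i) (α : ℝ) (b : EuclideanSpace ℝ (Fin n) → ℂ) (Q : BetaCube n β) :
    osc β α b Q = Q.l ^ (-α) *
      ((Q.l ^ (∑ i, β i))⁻¹ * ∫ x in Q.set, ‖b x - cubeAvg Q b‖) := by
  rw [osc, setAverage_eq, Q.volume_real_set, smul_eq_mul, ← Real.rpow_mul Q.l_pos.le]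
  congr 2
  field_simp

lemma osc_nonneg (α : ℝ) (b : EuclideanSpace ℝ (Fin n) → ℂ) (Q : BetaCube n β) :
    0 ≤ osc β α b Q := by
  rw [osc, setAverage_eq]
  have := Q.rpow_pos (∑ i, β i)
  refine mul_nonneg (by positivity) (smul_nonneg (by positivity) ?_)
  exact integral_nonneg fun x => norm_nonneg _

/-- The mean integral of `‖b - ⟨b⟩_Q‖` recovered from the normalised oscillation. -/
lemma mean_eq_osc (hS : 0 < ∑ i, β i) (α : ℝ) (b : EuclideanSpace ℝ (Fin n) → ℂ)
    (Q : BetaCube n β) :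
    (Q.l ^ (∑ i, β i))⁻¹ * ∫ x in Q.set, ‖b x - cubeAvg Q b‖ = Q.l ^ α * osc β α b Q := by
  rw [osc_eq hS, ← mul_assoc, ← Real.rpow_add Q.l_pos]
  simp

/-- Replacing the average by an arbitrary constant costs at most a factor `2`. -/
lemma osc_le_const (hS : 0 < ∑ i, β i) (α : ℝ) {b : EuclideanSpace ℝ (Fin n) → ℂ}
    (hb : LocallyIntegrable b volume) (Q : BetaCube n β) (a : ℂ) :
    osc β α b Q ≤ 2 * (Q.l ^ (-α) * ((Q.l ^ (∑ i, β i))⁻¹ * ∫ x in Q.set, ‖b x - a‖)) := by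
  rw [osc_eq hS]
  have hV := Q.rpow_pos (∑ i, β i)
  have hα := Q.rpow_pos (-α)
  have h1 : ∫ x in Q.set, ‖b x - cubeAvg Q b‖ ≤
      ∫ x in Q.set, (‖b x - a‖ + ‖cubeAvg Q b - a‖) := by
    refine setIntegral_mono (Q.integrableOn_sub_const hb _)
      ((Q.integrableOn_sub_const hb a).add
        (integrable_norm_iff (by fun_prop) |>.2 (Q.integrableOn_const _))) fun x => ?_
    have : b x - cubeAvg Q b = (b x - a) - (cubeAvg Q b - a) := by ring
    rw [this]
    exact norm_sub_le _ _
  rw [integral_add (Q.integrableOn_sub_const hb a)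
    (integrable_norm_iff (by fun_prop) |>.2 (Q.integrableOn_const _)),
    setIntegral_const, Q.volume_real_set, smul_eq_mul] at h1
  have h2 := norm_cubeAvg_sub_le Q hb a
  rw [mul_left_comm 2]
  refine mul_le_mul_of_nonneg_left ?_ hα.le
  have h3 := mul_le_mul_of_nonneg_left h1 (inv_nonneg.2 hV.le)
  rw [mul_add, inv_mul_cancel_left₀ hV.ne'] at h3
  linarith

lemma osc_le_of_forall (hS : 0 < ∑ i, β i) (α : ℝ) {b : EuclideanSpace ℝ (Fin n) → ℂ}
    (hb : LocallyIntegrable b volume) (Q : BetaCube n β) (a : ℂ) {D : ℝ}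
    (h : ∀ x ∈ Q.set, ‖b x - a‖ ≤ D) : osc β α b Q ≤ 2 * (Q.l ^ (-α) * D) := by
  refine (osc_le_const hS α hb Q a).trans ?_
  have hV := Q.rpow_pos (∑ i, β i)
  have hα := Q.rpow_pos (-α)
  have h1 : ∫ x in Q.set, ‖b x - a‖ ≤ ∫ x in Q.set, D :=
    setIntegral_mono_on (Q.integrableOn_sub_const hb a)
      (integrableOn_const Q.isCompact_set.measure_ne_top) Q.measurableSet_set h
  rw [setIntegral_const, Q.volume_real_set, smul_eq_mul] at h1
  have h3 := mul_le_mul_of_nonneg_left h1 (inv_nonneg.2 hV.le)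
  rw [inv_mul_cancel_left₀ hV.ne'] at h3
  gcongr

lemma norm_cubeAvg_sub_le_of_forall (Q : BetaCube n β) {b : EuclideanSpace ℝ (Fin n) → ℂ}
    (hb : LocallyIntegrable b volume) (a : ℂ) {D : ℝ}
    (h : ∀ x ∈ Q.set, ‖b x - a‖ ≤ D) : ‖cubeAvg Q b - a‖ ≤ D := by
  refine (norm_cubeAvg_sub_le Q hb a).trans ?_
  have hV := Q.rpow_pos (∑ i, β i)
  have h1 : ∫ x in Q.set, ‖b x - a‖ ≤ ∫ x in Q.set, D :=
    setIntegral_mono_on (Q.integrableOn_sub_const hb a)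
      (integrableOn_const Q.isCompact_set.measure_ne_top) Q.measurableSet_set h
  rw [setIntegral_const, Q.volume_real_set, smul_eq_mul] at h1
  have h3 := mul_le_mul_of_nonneg_left h1 (inv_nonneg.2 hV.le)
  rwa [inv_mul_cancel_left₀ hV.ne'] at h3

lemma osc_add_le (hS : 0 < ∑ i, β i) (α : ℝ) {a b : EuclideanSpace ℝ (Fin n) → ℂ}
    (ha : LocallyIntegrable a volume) (hb : LocallyIntegrable b volume) (Q : BetaCube n β) :
    osc β α (a + b) Q ≤ osc β α a Q + osc β α b Q := by
  have hV := Q.rpow_pos (∑ i, β i)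
  have hα := Q.rpow_pos (-α)
  rw [osc_eq hS, osc_eq hS, osc_eq hS, ← mul_add, ← mul_add,
    ← integral_add (Q.integrableOn_sub_const ha _) (Q.integrableOn_sub_const hb _)]
  refine mul_le_mul_of_nonneg_left (mul_le_mul_of_nonneg_left ?_ (inv_nonneg.2 hV.le)) hα.le
  refine setIntegral_mono (Q.integrableOn_sub_const (ha.add hb) _)
    ((Q.integrableOn_sub_const ha _).add (Q.integrableOn_sub_const hb _)) fun x => ?_
  rw [cubeAvg_add Q ha hb]
  have : (a + b) x - (cubeAvg Q a + cubeAvg Q b) = (a x - cubeAvg Q a) + (b x - cubeAvg Q b) := by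
    simp only [Pi.add_apply]; ring
  rw [this]
  exact norm_add_le _ _

lemma osc_smul (α : ℝ) (k : ℝ) (b : EuclideanSpace ℝ (Fin n) → ℂ) (Q : BetaCube n β) :
    osc β α (k • b) Q = |k| * osc β α b Q := by
  have h : ∀ x, ‖(k • b) x - cubeAvg Q (k • b)‖ = |k| * ‖b x - cubeAvg Q b‖ := fun x => by
    rw [cubeAvg_smul, Pi.smul_apply, ← smul_sub, norm_smul, Real.norm_eq_abs]
  simp only [osc, setAverage_eq, h, integral_const_mul, smul_eq_mul]
  ring

lemma osc_neg (α : ℝ) (b : EuclideanSpace ℝ (Fin n) → ℂ) (Q : BetaCube n β) :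
    osc β α (-b) Q = osc β α b Q := by
  have := osc_smul α (-1) b Q
  simpa using this

lemma osc_sub_le (hS : 0 < ∑ i, β i) (α : ℝ) {a b : EuclideanSpace ℝ (Fin n) → ℂ}
    (ha : LocallyIntegrable a volume) (hb : LocallyIntegrable b volume) (Q : BetaCube n β) :
    osc β α (a - b) Q ≤ osc β α a Q + osc β α b Q := by
  rw [sub_eq_add_neg, ← osc_neg α b]
  exact osc_add_le hS α ha hb.neg Q

/-- Averages over nested cubes differ by at most the unnormalised oscillation over the larger cube,
times the ratio of the volumes. -/
lemma norm_cubeAvg_sub_cubeAvg_le (hS : 0 < ∑ i, β i) (α : ℝ)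
    {b : EuclideanSpace ℝ (Fin n) → ℂ} (hb : LocallyIntegrable b volume) {Q P : BetaCube n β}
    (hQP : Q.set ⊆ P.set) :
    ‖cubeAvg Q b - cubeAvg P b‖ ≤ (P.l / Q.l) ^ (∑ i, β i) * (P.l ^ α * osc β α b P) := by
  refine (norm_cubeAvg_sub_le Q hb _).trans ?_
  have hV := Q.rpow_pos (∑ i, β i)
  have hV' := P.rpow_pos (∑ i, β i)
  rw [← mean_eq_osc hS, Real.div_rpow P.l_pos.le Q.l_pos.le]
  have h1 : ∫ x in Q.set, ‖b x - cubeAvg P b‖ ≤ ∫ x in P.set, ‖b x - cubeAvg P b‖ :=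
    setIntegral_mono_set (P.integrableOn_sub_const hb _)
      (Filter.Eventually.of_forall fun x => norm_nonneg _) hQP.eventuallyLE
  refine (mul_le_mul_of_nonneg_left h1 (inv_nonneg.2 hV.le)).trans (le_of_eq ?_)
  field_simp

lemma osc_mono (hS : 0 < ∑ i, β i) (α : ℝ)
    {b : EuclideanSpace ℝ (Fin n) → ℂ} (hb : LocallyIntegrable b volume) {Q P : BetaCube n β}
    (hQP : Q.set ⊆ P.set) :
    osc β α b Q ≤ 2 * (P.l / Q.l) ^ (α + ∑ i, β i) * osc β α b P := by
  refine (osc_le_const hS α hb Q (cubeAvg P b)).trans ?_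
  have hV := Q.rpow_pos (∑ i, β i)
  have hα := Q.rpow_pos (-α)
  have hV' := P.rpow_pos (∑ i, β i)
  have h1 : ∫ x in Q.set, ‖b x - cubeAvg P b‖ ≤ ∫ x in P.set, ‖b x - cubeAvg P b‖ :=
    setIntegral_mono_set (P.integrableOn_sub_const hb _)
      (Filter.Eventually.of_forall fun x => norm_nonneg _) hQP.eventuallyLE
  have h2 := mean_eq_osc hS α b P
  rw [inv_mul_eq_iff_eq_mul₀ hV'.ne'] at h2
  rw [h2] at h1
  rw [Real.rpow_add (div_pos P.l_pos Q.l_pos), Real.div_rpow P.l_pos.le Q.l_pos.le,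
    Real.div_rpow P.l_pos.le Q.l_pos.le]
  have hα2 := Q.rpow_pos α
  calc _ ≤ 2 * (Q.l ^ (-α) * ((Q.l ^ ∑ i, β i)⁻¹ *
        (P.l ^ (∑ i, β i) * (P.l ^ α * osc β α b P)))) := by gcongr
    _ = _ := by
      rw [Real.rpow_neg Q.l_pos.le]
      field_simp

lemma BetaCube.set_subset_of_le (hβ : ∀ i, 0 < β i) {Q P : BetaCube n β} (hc : Q.c = P.c)
    (hl : Q.l ≤ P.l) : Q.set ⊆ P.set := by
  intro x hx i
  have := hx i
  rw [hc] at this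
  have h2 := Real.rpow_le_rpow Q.l_pos.le hl (hβ i).le
  linarith

/-! ### Translations and mollification -/

lemma BetaCube.sub_mem_translate_neg (Q : BetaCube n β) (v x : EuclideanSpace ℝ (Fin n)) :
    x - v ∈ (Q.translate (-v)).set ↔ x ∈ Q.set := by
  have h : ∀ i, (x - v) i - (Q.c + -v) i = x i - Q.c i := fun i => by
    simp only [PiLp.sub_apply, PiLp.add_apply, PiLp.neg_apply]; ring
  simp only [BetaCube.set, BetaCube.translate, Set.mem_ofPred_eq, h]

lemma setIntegral_shift {F : Type*} [NormedAddCommGroup F] [NormedSpace ℝ F] (Q : BetaCube n β)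
    (u : EuclideanSpace ℝ (Fin n) → F) (v : EuclideanSpace ℝ (Fin n)) :
    ∫ x in Q.set, u (x - v) = ∫ x in (Q.translate (-v)).set, u x := by
  rw [← integral_indicator Q.measurableSet_set,
    ← integral_indicator (Q.translate (-v)).measurableSet_set,
    ← integral_sub_right_eq_self ((Q.translate (-v)).set.indicator u) v]
  congr 1
  ext x
  by_cases hx : x ∈ Q.set
  · rw [Set.indicator_of_mem hx, Set.indicator_of_mem ((Q.sub_mem_translate_neg v x).2 hx)]
  · rw [Set.indicator_of_notMem hx,
      Set.indicator_of_notMem (fun h => hx ((Q.sub_mem_translate_neg v x).1 h))]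

lemma cubeAvg_shift (Q : BetaCube n β) (h : EuclideanSpace ℝ (Fin n) → ℂ)
    (v : EuclideanSpace ℝ (Fin n)) :
    cubeAvg Q (fun x => h (x - v)) = cubeAvg (Q.translate (-v)) h := by
  rw [cubeAvg_eq, cubeAvg_eq, setIntegral_shift Q h v]
  rfl

lemma osc_shift (hS : 0 < ∑ i, β i) (α : ℝ) (h : EuclideanSpace ℝ (Fin n) → ℂ)
    (v : EuclideanSpace ℝ (Fin n)) (Q : BetaCube n β) :
    osc β α (fun x => h (x - v)) Q = osc β α h (Q.translate (-v)) := by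
  rw [osc_eq hS, osc_eq hS, cubeAvg_shift,
    setIntegral_shift Q (fun x => ‖h x - cubeAvg (Q.translate (-v)) h‖) v]
  rfl

lemma locallyIntegrable_shift {h : EuclideanSpace ℝ (Fin n) → ℂ}
    (hh : LocallyIntegrable h volume) (v : EuclideanSpace ℝ (Fin n)) :
    LocallyIntegrable (fun x => h (x - v)) volume := by
  rw [locallyIntegrable_iff]
  intro K hK
  have hK' : IsCompact ((fun x => x - v) '' K) := hK.image (by fun_prop)
  have h1 := (hh.integrableOn_isCompact hK').integrable_indicator hK'.measurableSet
  have h2 := (h1.comp_sub_right v).integrableOn (s := K)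
  refine h2.congr_fun (fun x hx => ?_) hK.measurableSet
  exact Set.indicator_of_mem (Set.mem_image_of_mem _ hx) h

/-- The mollification `φ ⋆ h`, with `φ` rescaled to have integral `1`. -/
def mollify (φ : ContDiffBump (0 : EuclideanSpace ℝ (Fin n)))
    (h : EuclideanSpace ℝ (Fin n) → ℂ) : EuclideanSpace ℝ (Fin n) → ℂ :=
  fun x => ∫ v, φ.normed volume v • h (x - v)

lemma mollify_eq_convolution (φ : ContDiffBump (0 : EuclideanSpace ℝ (Fin n)))
    (h : EuclideanSpace ℝ (Fin n) → ℂ) :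
    mollify φ h =
      MeasureTheory.convolution (φ.normed volume) h (ContinuousLinearMap.lsmul ℝ ℝ) volume := rfl

lemma contDiff_mollify (φ : ContDiffBump (0 : EuclideanSpace ℝ (Fin n)))
    {h : EuclideanSpace ℝ (Fin n) → ℂ} (hh : LocallyIntegrable h volume) :
    ContDiff ℝ (⊤ : ℕ∞) (mollify φ h) := by
  rw [mollify_eq_convolution]
  exact φ.hasCompactSupport_normed.contDiff_convolution_left _ φ.contDiff_normed hh

lemma hasCompactSupport_mollify (φ : ContDiffBump (0 : EuclideanSpace ℝ (Fin n)))
    {h : EuclideanSpace ℝ (Fin n) → ℂ} (hh : HasCompactSupport h) :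
    HasCompactSupport (mollify φ h) := by
  rw [mollify_eq_convolution]
  exact φ.hasCompactSupport_normed.convolution _ hh

lemma locallyIntegrable_mollify (φ : ContDiffBump (0 : EuclideanSpace ℝ (Fin n)))
    {h : EuclideanSpace ℝ (Fin n) → ℂ} (hh : LocallyIntegrable h volume) :
    LocallyIntegrable (mollify φ h) volume :=
  (contDiff_mollify φ hh).continuous.locallyIntegrable

lemma integrable_mollify_kernel (φ : ContDiffBump (0 : EuclideanSpace ℝ (Fin n)))
    {h : EuclideanSpace ℝ (Fin n) → ℂ} (hh : LocallyIntegrable h volume) (Q : BetaCube n β) :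
    Integrable (fun p : EuclideanSpace ℝ (Fin n) × EuclideanSpace ℝ (Fin n) =>
      φ.normed volume p.2 • h (p.1 - p.2)) ((volume.restrict Q.set).prod volume) := by
  set K : Set (EuclideanSpace ℝ (Fin n)) :=
    (fun p : EuclideanSpace ℝ (Fin n) × EuclideanSpace ℝ (Fin n) => p.1 - p.2) ''
      (Q.set ×ˢ Metric.closedBall 0 φ.rOut) with hKdef
  have hK : IsCompact K :=
    (Q.isCompact_set.prod (isCompact_closedBall _ _)).image (by fun_prop)
  have h1 := (hh.integrableOn_isCompact hK).integrable_indicator hK.measurableSet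
  have h2 := Integrable.convolution_integrand (ContinuousLinearMap.lsmul ℝ ℝ)
    (φ.integrable_normed (μ := volume)) h1
  have h3 := h2.integrableOn (s := Q.set ×ˢ Set.univ)
  have h4 : IntegrableOn (fun p : EuclideanSpace ℝ (Fin n) × EuclideanSpace ℝ (Fin n) =>
      φ.normed volume p.2 • h (p.1 - p.2)) (Q.set ×ˢ Set.univ) (volume.prod volume) := by
    refine h3.congr_fun (fun p hp => ?_) (Q.measurableSet_set.prod MeasurableSet.univ)
    simp only [ContinuousLinearMap.lsmul_apply]
    by_cases hv : p.2 ∈ Metric.closedBall (0 : EuclideanSpace ℝ (Fin n)) φ.rOut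
    · rw [Set.indicator_of_mem]
      exact ⟨p, ⟨hp.1, hv⟩, rfl⟩
    · have : φ.normed volume p.2 = 0 := by
        by_contra hne
        have : p.2 ∈ Function.support (φ.normed volume) := hne
        rw [φ.support_normed_eq] at this
        exact hv (Metric.ball_subset_closedBall this)
      rw [this, zero_smul, zero_smul]
  rw [IntegrableOn, ← Measure.prod_restrict, Measure.restrict_univ] at h4
  exact h4

/-- Minkowski's inequality: the oscillation of `b - φ ⋆ h` is controlled by the oscillations of
`b - h(· - v)` with `v` in the support of `φ`. -/
lemma osc_sub_mollify_le (hS : 0 < ∑ i, β i) (α : ℝ)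
    (φ : ContDiffBump (0 : EuclideanSpace ℝ (Fin n)))
    {b h : EuclideanSpace ℝ (Fin n) → ℂ} (hb : LocallyIntegrable b volume)
    (hh : LocallyIntegrable h volume) (Q : BetaCube n β) {B : ℝ}
    (H : ∀ v : EuclideanSpace ℝ (Fin n), ‖v‖ ≤ φ.rOut →
      osc β α (b - fun x => h (x - v)) Q ≤ B) :
    osc β α (b - mollify φ h) Q ≤ 2 * B := by
  set ψ : EuclideanSpace ℝ (Fin n) → ℝ := φ.normed volume with hψ
  have hψi : Integrable ψ volume := φ.integrable_normed
  have hψ0 : ∀ v, 0 ≤ ψ v := φ.nonneg_normed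
  set m : EuclideanSpace ℝ (Fin n) → ℂ := fun v => cubeAvg Q (b - fun x => h (x - v)) with hm
  have hV := Q.rpow_pos (∑ i, β i)
  have hα := Q.rpow_pos (-α)
  have hbQ : Integrable b (volume.restrict Q.set) := Q.integrableOn hb
  have hker := integrable_mollify_kernel φ hh Q
  have hbψ : Integrable (fun p : EuclideanSpace ℝ (Fin n) × EuclideanSpace ℝ (Fin n) =>
      ψ p.2 • b p.1) ((volume.restrict Q.set).prod volume) := by
    have := hbQ.mul_prod (hψi.ofReal (𝕜 := ℂ))
    refine this.congr (Filter.Eventually.of_forall fun p => ?_)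
    simp [mul_comm]
  have hψm : ∀ v, ψ v • m v = (Q.l ^ (∑ i, β i))⁻¹ •
      ∫ x in Q.set, (ψ v • b x - ψ v • h (x - v)) := fun v => by
    rw [hm]
    simp only [cubeAvg_eq, Pi.sub_apply, ← smul_sub]
    rw [integral_smul, smul_comm]
  have hψmi : Integrable (fun v => ψ v • m v) volume := by
    simp only [hψm]
    exact ((hbψ.sub hker).integral_prod_right).smul ((Q.l ^ (∑ i, β i))⁻¹)
  have hmprod : Integrable (fun p : EuclideanSpace ℝ (Fin n) × EuclideanSpace ℝ (Fin n) =>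
      ψ p.2 • m p.2) ((volume.restrict Q.set).prod volume) := by
    have : IsFiniteMeasure (volume.restrict Q.set) :=
      ⟨by simpa using Q.isCompact_set.measure_lt_top⟩
    exact hψmi.comp_snd _
  set G : EuclideanSpace ℝ (Fin n) → EuclideanSpace ℝ (Fin n) → ℂ :=
    fun x v => ψ v • (b x - h (x - v) - m v) with hG
  have hGi : Integrable (Function.uncurry G) ((volume.restrict Q.set).prod volume) := by
    refine ((hbψ.sub hker).sub hmprod).congr (Filter.Eventually.of_forall fun p => ?_)
    simp only [Pi.sub_apply, Function.uncurry, hG, smul_sub]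
    rfl
  have hψ_int : ∫ v, ψ v = 1 := φ.integral_normed
  set a : ℂ := ∫ v, ψ v • m v with ha
  have hpt : ∀ x ∈ Q.set, (b - mollify φ h) x - a = ∫ v, G x v := by
    intro x hx
    have e1 : Integrable (fun v => ψ v • b x) volume := hψi.smul_const _
    have e2 : Integrable (fun v => ψ v • h (x - v)) volume := by
      have := φ.hasCompactSupport_normed (μ := volume) |>.convolutionExists_left
        (ContinuousLinearMap.lsmul ℝ ℝ) φ.continuous_normed hh x
      exact this
    simp only [hG, smul_sub]
    rw [integral_sub (f := fun v => ψ v • b x - ψ v • h (x - v)) (e1.sub e2) hψmi,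
      integral_sub e1 e2, integral_smul_const, hψ_int, one_smul]
    rfl
  refine (osc_le_const hS α (hb.sub (locallyIntegrable_mollify φ hh)) Q a).trans ?_
  refine mul_le_mul_of_nonneg_left ?_ zero_le_two
  have h1 : ∫ x in Q.set, ‖(b - mollify φ h) x - a‖ ≤ ∫ x in Q.set, ∫ v, ‖G x v‖ := by
    refine setIntegral_mono_on
      (Q.integrableOn_sub_const (hb.sub (locallyIntegrable_mollify φ hh)) a)
      hGi.norm.integral_prod_left Q.measurableSet_set fun x hx => ?_
    rw [hpt x hx]
    exact norm_integral_le_integral_norm _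
  have h2 : ∫ x in Q.set, ∫ v, ‖G x v‖ = ∫ v, ∫ x in Q.set, ‖G x v‖ :=
    integral_integral_swap hGi.norm
  have h3 : ∀ v, ∫ x in Q.set, ‖G x v‖ ≤ ψ v * (Q.l ^ (∑ i, β i) * (Q.l ^ α * B)) := by
    intro v
    have e : ∀ x, ‖G x v‖ = ψ v * ‖(b - fun x => h (x - v)) x - m v‖ := fun x => by
      simp only [hG, norm_smul, Real.norm_of_nonneg (hψ0 v), Pi.sub_apply]
    simp only [e]
    rw [integral_const_mul]
    by_cases hv : ‖v‖ ≤ φ.rOut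
    · refine mul_le_mul_of_nonneg_left ?_ (hψ0 v)
      have h4 := mean_eq_osc hS α (b - fun x => h (x - v)) Q
      rw [inv_mul_eq_iff_eq_mul₀ hV.ne'] at h4
      rw [h4]
      have := Q.rpow_pos α
      have := H v hv
      gcongr
    · have : ψ v = 0 := by
        by_contra hne
        have : v ∈ Function.support (φ.normed volume) := hne
        rw [φ.support_normed_eq, mem_ball_zero_iff] at this
        exact hv this.le
      rw [this, zero_mul, zero_mul]
  have h5 : ∫ v, ∫ x in Q.set, ‖G x v‖ ≤ Q.l ^ (∑ i, β i) * (Q.l ^ α * B) := by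
    calc _ ≤ ∫ v, ψ v * (Q.l ^ (∑ i, β i) * (Q.l ^ α * B)) :=
          integral_mono hGi.norm.integral_prod_right (hψi.mul_const _) h3
      _ = _ := by rw [integral_mul_const, hψ_int, one_mul]
  calc _ ≤ Q.l ^ (-α) * ((Q.l ^ (∑ i, β i))⁻¹ * (Q.l ^ (∑ i, β i) * (Q.l ^ α * B))) := by
        rw [h2] at h1
        have := h1.trans h5
        gcongr
    _ = B := by
      rw [inv_mul_cancel_left₀ hV.ne', ← mul_assoc, ← Real.rpow_add Q.l_pos]
      simp

/-- Mollifying at most doubles a bound on the oscillations over nearby translates of `Q`. -/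
lemma osc_mollify_le (hS : 0 < ∑ i, β i) (α : ℝ)
    (φ : ContDiffBump (0 : EuclideanSpace ℝ (Fin n)))
    {h : EuclideanSpace ℝ (Fin n) → ℂ} (hh : LocallyIntegrable h volume) (Q : BetaCube n β)
    {B : ℝ} (H : ∀ v : EuclideanSpace ℝ (Fin n), ‖v‖ ≤ φ.rOut → osc β α h (Q.translate v) ≤ B) :
    osc β α (mollify φ h) Q ≤ 2 * B := by
  have := osc_sub_mollify_le hS α φ (b := 0) locallyIntegrable_zero hh Q (B := B) fun v hv => by
    rw [zero_sub, osc_neg, osc_shift hS]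
    exact H _ (by rwa [norm_neg])
  rwa [zero_sub, osc_neg] at this

/-- Continuity of translations in `L¹` of a cube. -/
lemma exists_shift_close {h : EuclideanSpace ℝ (Fin n) → ℂ} (hh : LocallyIntegrable h volume)
    (Q : BetaCube n β) {ε : ℝ} (hε : 0 < ε) :
    ∃ δ > 0, ∀ v : EuclideanSpace ℝ (Fin n), ‖v‖ ≤ δ →
      ∫ x in Q.set, ‖h x - h (x - v)‖ ≤ ε := by
  have hK : IsCompact (Metric.cthickening 1 Q.set) := Q.isCompact_set.cthickening
  set h1 := (Metric.cthickening 1 Q.set).indicator h with hh1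
  have hi := (hh.integrableOn_isCompact hK).integrable_indicator hK.measurableSet
  obtain ⟨u, hus, hu, huc, hui⟩ :=
    hi.exists_hasCompactSupport_integral_sub_le (ε := ε / 3) (by positivity)
  have huu := hus.uniformContinuous_of_continuous huc
  have hV := Q.rpow_pos (∑ i, β i)
  obtain ⟨δ, hδ, hδu⟩ := Metric.uniformContinuous_iff.1 huu (ε / 3 / Q.l ^ (∑ i, β i))
    (by positivity)
  refine ⟨min 1 (δ / 2), by positivity, fun v hv => ?_⟩
  have hv1 : ‖v‖ ≤ 1 := hv.trans (min_le_left _ _)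
  have hv2 : ‖v‖ < δ := lt_of_le_of_lt (hv.trans (min_le_right _ _)) (by linarith)
  have hd : Integrable (fun x => ‖h1 x - u x‖) volume := (hi.sub hui).norm
  have hd' : Integrable (fun x => ‖h1 (x - v) - u (x - v)‖) volume := hd.comp_sub_right v
  calc ∫ x in Q.set, ‖h x - h (x - v)‖
      ≤ ∫ x in Q.set, (‖h1 x - u x‖ + ε / 3 / Q.l ^ (∑ i, β i) + ‖h1 (x - v) - u (x - v)‖) := by
        refine setIntegral_mono_on
          ((Q.integrableOn hh).sub (Q.integrableOn (locallyIntegrable_shift hh v))).norm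
          ((hd.integrableOn.add (integrableOn_const Q.isCompact_set.measure_ne_top)).add
            hd'.integrableOn) Q.measurableSet_set fun x hx => ?_
        have m1 : x ∈ Metric.cthickening 1 Q.set := Metric.self_subset_cthickening _ hx
        have m2 : x - v ∈ Metric.cthickening 1 Q.set :=
          Metric.mem_cthickening_of_dist_le (x - v) x 1 Q.set hx (by simpa using hv1)
        have e1 : h1 x = h x := Set.indicator_of_mem m1 h
        have e2 : h1 (x - v) = h (x - v) := Set.indicator_of_mem m2 h
        rw [← e1, ← e2]
        have hu' : ‖u x - u (x - v)‖ ≤ ε / 3 / Q.l ^ (∑ i, β i) := by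
          rw [← dist_eq_norm]
          exact (hδu (by simpa using hv2)).le
        have : h1 x - h1 (x - v) = (h1 x - u x) + (u x - u (x - v)) - (h1 (x - v) - u (x - v)) := by
          ring
        rw [this]
        refine (norm_sub_le _ _).trans (add_le_add_left ((norm_add_le _ _).trans ?_) _)
        gcongr
    _ = (∫ x in Q.set, ‖h1 x - u x‖) + ε / 3 + ∫ x in Q.set, ‖h1 (x - v) - u (x - v)‖ := by
        rw [integral_add (f := fun x => ‖h1 x - u x‖ + ε / 3 / Q.l ^ (∑ i, β i))
          (hd.integrableOn.add (integrableOn_const Q.isCompact_set.measure_ne_top))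
          hd'.integrableOn,
          integral_add hd.integrableOn (integrableOn_const Q.isCompact_set.measure_ne_top),
          setIntegral_const, Q.volume_real_set, smul_eq_mul, mul_div_cancel₀ _ hV.ne']
    _ ≤ ε / 3 + ε / 3 + ε / 3 := by
        have a1 : ∫ x in Q.set, ‖h1 x - u x‖ ≤ ε / 3 :=
          (setIntegral_le_integral hd (Filter.Eventually.of_forall fun x => norm_nonneg _)).trans hu
        have a2 : ∫ x in Q.set, ‖h1 (x - v) - u (x - v)‖ ≤ ε / 3 := by
          refine (setIntegral_le_integral hd'
            (Filter.Eventually.of_forall fun x => norm_nonneg _)).trans ?_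
          rw [integral_sub_right_eq_self (fun x => ‖h1 x - u x‖) v]
          exact hu
        linarith
    _ = ε := by ring

/-- Mollifications at small scale are close to the function on any given cube. -/
lemma exists_mollify_close (hS : 0 < ∑ i, β i) (α : ℝ) {h : EuclideanSpace ℝ (Fin n) → ℂ}
    (hh : LocallyIntegrable h volume) (Q : BetaCube n β) {ε : ℝ} (hε : 0 < ε) :
    ∃ δ > 0, ∀ φ : ContDiffBump (0 : EuclideanSpace ℝ (Fin n)), φ.rOut ≤ δ →
      osc β α (h - mollify φ h) Q ≤ ε := by
  have hV := Q.rpow_pos (∑ i, β i)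
  have hα := Q.rpow_pos (-α)
  obtain ⟨δ, hδ, H⟩ := exists_shift_close hh Q
    (ε := ε / 4 / (Q.l ^ (-α) * (Q.l ^ (∑ i, β i))⁻¹)) (by positivity)
  refine ⟨δ, hδ, fun φ hφ => ?_⟩
  have := osc_sub_mollify_le hS α φ hh hh Q (B := ε / 2) fun v hv => by
    refine (osc_le_const hS α (hh.sub (locallyIntegrable_shift hh v)) Q 0).trans ?_
    have h1 := H v (hv.trans hφ)
    rw [le_div_iff₀ (by positivity)] at h1
    simp only [sub_zero, Pi.sub_apply]
    linarith
  linarith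

/-! ### Vanishing oscillation off compact families of cubes -/

/-- Oscillations of `b` tend to `0` as the cube leaves the compact families of cubes
`{Q : r ≤ ℓ(Q) ≤ R, ‖c_Q‖ ≤ ρ}`. -/
def VanishesOff (β : Fin n → ℝ) (α : ℝ) (b : EuclideanSpace ℝ (Fin n) → ℂ) : Prop :=
  ∀ ε > (0 : ℝ), ∃ r > (0 : ℝ), ∃ R > (0 : ℝ), ∃ ρ > (0 : ℝ), ∀ Q : BetaCube n β,
    (Q.l ≤ r ∨ R ≤ Q.l ∨ ρ ≤ ‖Q.c‖) → osc β α b Q ≤ ε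

/-- The far-away condition of `MemVMO` concerns one cube at a time; since a cube of size in `[r, R]`
sits inside a cube of size `R` with the same centre, it holds uniformly over these sizes. -/
lemma MemVMO.vanishesOff (hS : 0 < ∑ i, β i) (hβ : ∀ i, 0 < β i) {α : ℝ} (hα : 0 ≤ α)
    {b : EuclideanSpace ℝ (Fin n) → ℂ} (hb : MemVMO β α b) : VanishesOff β α b := by
  obtain ⟨hloc, -, h1, h2, h3⟩ := hb
  intro ε hε
  obtain ⟨r, hr, H1⟩ := h1 ε hε
  obtain ⟨R, hR, H2⟩ := h2 ε hε
  have hc : 0 < 2 * (R / r) ^ (α + ∑ i, β i) := by positivity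
  obtain ⟨ρ, H3⟩ := h3 ⟨0, R, hR⟩ (ε / (2 * (R / r) ^ (α + ∑ i, β i))) (by positivity)
  refine ⟨r, hr, R, hR, max ρ 1, by positivity, fun Q hQ => ?_⟩
  by_cases hlr : Q.l ≤ r
  · exact H1 Q hlr
  by_cases hlR : R ≤ Q.l
  · exact H2 Q hlR
  push Not at hlr hlR
  have hQρ : ρ ≤ ‖Q.c‖ := by
    rcases hQ with h | h | h
    · linarith
    · linarith
    · exact (le_max_left _ _).trans h
  have h4 := H3 Q.c hQρ
  have h5 := osc_mono hS α hloc (Q := Q) (P := (⟨0, R, hR⟩ : BetaCube n β).translate Q.c)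
    (BetaCube.set_subset_of_le hβ (by simp [BetaCube.translate]) hlR.le)
  refine h5.trans ?_
  rw [le_div_iff₀ hc, mul_comm] at h4
  refine le_trans ?_ h4
  refine mul_le_mul_of_nonneg_right ?_ (osc_nonneg _ _ _)
  have : ((⟨0, R, hR⟩ : BetaCube n β).translate Q.c).l = R := rfl
  rw [this]
  have := Q.l_pos
  gcongr

lemma VanishesOff.add (hS : 0 < ∑ i, β i) {α : ℝ} {a b : EuclideanSpace ℝ (Fin n) → ℂ}
    (ha : LocallyIntegrable a volume) (hb : LocallyIntegrable b volume)
    (hav : VanishesOff β α a) (hbv : VanishesOff β α b) : VanishesOff β α (a + b) := by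
  intro ε hε
  obtain ⟨r, hr, R, hR, ρ, hρ, H⟩ := hav (ε / 2) (by positivity)
  obtain ⟨r', hr', R', hR', ρ', hρ', H'⟩ := hbv (ε / 2) (by positivity)
  refine ⟨min r r', by positivity, max R R', by positivity, max ρ ρ', by positivity,
    fun Q hQ => ?_⟩
  refine (osc_add_le hS α ha hb Q).trans ?_
  have e1 := H Q (hQ.imp (fun h => h.trans (min_le_left _ _))
    (Or.imp (fun h => (le_max_left _ _).trans h) (fun h => (le_max_left _ _).trans h)))
  have e2 := H' Q (hQ.imp (fun h => h.trans (min_le_right _ _))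
    (Or.imp (fun h => (le_max_right _ _).trans h) (fun h => (le_max_right _ _).trans h)))
  linarith

lemma VanishesOff.smul {α : ℝ} {b : EuclideanSpace ℝ (Fin n) → ℂ} (k : ℝ)
    (hbv : VanishesOff β α b) : VanishesOff β α (k • b) := by
  intro ε hε
  obtain ⟨r, hr, R, hR, ρ, hρ, H⟩ := hbv (ε / (|k| + 1)) (by positivity)
  refine ⟨r, hr, R, hR, ρ, hρ, fun Q hQ => ?_⟩
  have h1 := H Q hQ
  rw [le_div_iff₀ (by positivity)] at h1
  rw [osc_smul]
  nlinarith [osc_nonneg α b Q]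

lemma norm_le_sum_abs (x : EuclideanSpace ℝ (Fin n)) : ‖x‖ ≤ ∑ i, |x i| := by
  rw [EuclideanSpace.norm_eq]
  refine Real.sqrt_le_iff.2 ⟨Finset.sum_nonneg fun i _ => abs_nonneg _, ?_⟩
  simp only [Real.norm_eq_abs]
  exact Finset.sum_sq_le_sq_sum_of_nonneg fun i _ => abs_nonneg _

lemma BetaCube.norm_sub_center_le (Q : BetaCube n β) {x : EuclideanSpace ℝ (Fin n)}
    (hx : x ∈ Q.set) : ‖x - Q.c‖ ≤ ∑ i, Q.l ^ (β i) := by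
  refine (norm_le_sum_abs _).trans (Finset.sum_le_sum fun i _ => ?_)
  have h1 := hx i
  have := Q.rpow_pos (β i)
  rw [PiLp.sub_apply]
  linarith

/-- `C_c^∞` functions have vanishing oscillation as soon as `α` lies below every `β i`: on small
cubes the Lipschitz bound `ℓ ^ γ` beats `ℓ ^ α`, on large cubes the `L¹` norm is finite. -/
lemma vanishesOff_of_contDiff (hS : 0 < ∑ i, β i) (hβ : ∀ i, 0 < β i) {α : ℝ} (hα : 0 ≤ α)
    {γ : ℝ} (hγ : ∀ i, γ ≤ β i) (hαγ : α < γ)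
    {g : EuclideanSpace ℝ (Fin n) → ℂ} (hg : ContDiff ℝ (⊤ : ℕ∞) g) (hgc : HasCompactSupport g) :
    VanishesOff β α g := by
  have hgl : LocallyIntegrable g volume := hg.continuous.locallyIntegrable
  have hgi : Integrable g volume := hg.continuous.integrable_of_hasCompactSupport hgc
  obtain ⟨L, hL⟩ := hg.lipschitzWith_of_hasCompactSupport hgc (by simp)
  obtain ⟨ρ₀, hρ₀⟩ := hgc.isCompact.isBounded.exists_norm_le
  intro ε hε
  obtain ⟨r, hr, hr1, H1⟩ : ∃ r > (0 : ℝ), r ≤ 1 ∧ ∀ Q : BetaCube n β, Q.l ≤ r →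
      osc β α g Q ≤ ε := by
    set D : ℝ := 2 * (L * n) + 1 with hD
    have hDpos : 0 < D := by positivity
    refine ⟨min 1 ((ε / D) ^ (1 / (γ - α))), by positivity, min_le_left _ _, fun Q hQ => ?_⟩
    have hl1 : Q.l ≤ 1 := hQ.trans (min_le_left _ _)
    have hl2 : Q.l ^ (γ - α) ≤ ε / D := by
      have := Real.rpow_le_rpow Q.l_pos.le (hQ.trans (min_le_right _ _)) (sub_nonneg.2 hαγ.le)
      rwa [← Real.rpow_mul (by positivity), one_div_mul_cancel (sub_pos.2 hαγ).ne',
        Real.rpow_one] at this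
    have hp := Q.rpow_pos (γ - α)
    refine (osc_le_of_forall hS α hgl Q (g Q.c) (D := L * (n * Q.l ^ γ)) fun x hx => ?_).trans ?_
    · rw [← dist_eq_norm]
      refine (hL.dist_le_mul x Q.c).trans (mul_le_mul_of_nonneg_left ?_ L.2)
      rw [dist_eq_norm]
      refine (Q.norm_sub_center_le hx).trans ?_
      calc ∑ i, Q.l ^ (β i) ≤ ∑ _i : Fin n, Q.l ^ γ := Finset.sum_le_sum fun i _ =>
            Real.rpow_le_rpow_of_exponent_ge Q.l_pos hl1 (hγ i)
        _ = n * Q.l ^ γ := by simp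
    · have e : Q.l ^ (-α) * Q.l ^ γ = Q.l ^ (γ - α) := by
        rw [← Real.rpow_add Q.l_pos]; congr 1; ring
      calc 2 * (Q.l ^ (-α) * (L * (n * Q.l ^ γ))) = 2 * (L * n) * (Q.l ^ (-α) * Q.l ^ γ) := by ring
        _ ≤ D * Q.l ^ (γ - α) := by rw [e]; nlinarith
        _ ≤ ε := by rw [le_div_iff₀ hDpos] at hl2; linarith
  obtain ⟨R, hR, H2⟩ : ∃ R > (0 : ℝ), ∀ Q : BetaCube n β, R ≤ Q.l → osc β α g Q ≤ ε := by
    set D : ℝ := 2 * (∫ x, ‖g x‖) + 1 with hD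
    have hI : 0 ≤ ∫ x, ‖g x‖ := integral_nonneg fun x => norm_nonneg _
    have hDpos : 0 < D := by positivity
    refine ⟨max 1 ((D / ε) ^ (1 / ∑ i, β i)), by positivity, fun Q hQ => ?_⟩
    have hl1 : 1 ≤ Q.l := (le_max_left _ _).trans hQ
    have hl2 : D / ε ≤ Q.l ^ (∑ i, β i) := by
      have := Real.rpow_le_rpow (by positivity) ((le_max_right _ _).trans hQ) hS.le
      rwa [← Real.rpow_mul (by positivity), one_div_mul_cancel hS.ne', Real.rpow_one] at this
    have hV := Q.rpow_pos (∑ i, β i)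
    refine (osc_le_const hS α hgl Q 0).trans ?_
    have e1 : ∫ x in Q.set, ‖g x - 0‖ ≤ ∫ x, ‖g x‖ := by
      simp only [sub_zero]
      exact setIntegral_le_integral hgi.norm (Filter.Eventually.of_forall fun x => norm_nonneg _)
    have e2 : Q.l ^ (-α) ≤ 1 := Real.rpow_le_one_of_one_le_of_nonpos hl1 (by linarith)
    have e3 : 0 ≤ ∫ x in Q.set, ‖g x - 0‖ := integral_nonneg fun x => norm_nonneg _
    calc _ ≤ 2 * (1 * ((Q.l ^ (∑ i, β i))⁻¹ * ∫ x, ‖g x‖)) := by gcongr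
      _ ≤ (Q.l ^ (∑ i, β i))⁻¹ * D := by
        have := inv_pos.2 hV
        rw [hD]; nlinarith
      _ ≤ ε := by
        rw [inv_mul_le_iff₀ hV]
        rw [div_le_iff₀ hε] at hl2
        linarith
  refine ⟨r, hr, R, hR, max 1 (ρ₀ + ∑ i, R ^ (β i) + 1), by positivity, fun Q hQ => ?_⟩
  by_cases hlr : Q.l ≤ r
  · exact H1 Q hlr
  by_cases hlR : R ≤ Q.l
  · exact H2 Q hlR
  push Not at hlr hlR
  have hQρ : ρ₀ + ∑ i, R ^ (β i) + 1 ≤ ‖Q.c‖ := by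
    rcases hQ with h | h | h
    · linarith
    · linarith
    · exact (le_max_right _ _).trans h
  -- far away cubes of bounded size do not meet the support
  have := osc_le_of_forall hS α hgl Q 0 (D := 0) fun x hx => by
    have hx0 : g x = 0 := by
      by_contra hne
      have h1 := hρ₀ x (subset_tsupport g hne)
      have h2 := Q.norm_sub_center_le hx
      have h3 : ∑ i, Q.l ^ (β i) ≤ ∑ i, R ^ (β i) := Finset.sum_le_sum fun i _ =>
        Real.rpow_le_rpow Q.l_pos.le hlR.le (hβ i).le
      have h4 : ‖Q.c‖ ≤ ‖x‖ + ‖x - Q.c‖ := by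
        have : Q.c = x - (x - Q.c) := by abel
        calc ‖Q.c‖ = ‖x - (x - Q.c)‖ := by rw [← this]
          _ ≤ _ := norm_sub_le _ _
      linarith
    simp [hx0]
  simp only [mul_zero] at this
  linarith

/-! ### Growth of averages -/

/-- A dilation factor `κ` with `κ ^ β i ≥ 3` whenever `0 < γ ≤ β i`: the `κ`-dilate of a
`β`-cube contains every cube of at most the same size that meets it. -/
def dil (γ : ℝ) : ℝ := 3 ^ (1 / γ)

lemma dil_pos (γ : ℝ) : 0 < dil γ := by unfold dil; positivity

lemma one_le_dil {γ : ℝ} (hγ : 0 < γ) : 1 ≤ dil γ :=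
  Real.one_le_rpow (by norm_num) (by positivity)

lemma three_le_dil_rpow {γ b : ℝ} (hγ : 0 < γ) (hb : γ ≤ b) : 3 ≤ dil γ ^ b := by
  rw [dil, ← Real.rpow_mul (by norm_num)]
  have : 1 ≤ 1 / γ * b := by rw [one_div_mul_eq_div]; exact (one_le_div hγ).2 hb
  simpa using Real.rpow_le_rpow_of_exponent_le (x := 3) (by norm_num) this

lemma three_mul_le_dil_mul_rpow {γ b l : ℝ} (hγ : 0 < γ) (hb : γ ≤ b) (hl : 0 < l) :
    3 * l ^ b ≤ (dil γ * l) ^ b := by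
  rw [Real.mul_rpow (dil_pos γ).le hl.le]
  exact mul_le_mul_of_nonneg_right (three_le_dil_rpow hγ hb) (by positivity)

lemma BetaCube.subset_dil {γ : ℝ} (hγ : 0 < γ) (hγβ : ∀ i, γ ≤ β i) {Q P : BetaCube n β}
    (hQP : Q.l ≤ P.l) (hne : (Q.set ∩ P.set).Nonempty) (hpos : 0 < dil γ * P.l) :
    P.set ⊆ (⟨Q.c, dil γ * P.l, hpos⟩ : BetaCube n β).set := by
  intro y hy i
  obtain ⟨x, hxQ, hxP⟩ := hne
  have h1 := abs_le.1 (hy i)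
  have h2 := abs_le.1 (hxQ i)
  have h3 := abs_le.1 (hxP i)
  have h4 := three_mul_le_dil_mul_rpow hγ (hγβ i) P.l_pos
  have h5 := Real.rpow_le_rpow Q.l_pos.le hQP (hγ.le.trans (hγβ i))
  simp only
  rw [abs_le]
  constructor <;> linarith [h1.1, h1.2, h2.1, h2.2, h3.1, h3.2]

/-- Averages over two intersecting cubes are compared through the oscillation over a cube of size
`dil γ * ℓ(P)` containing both. -/
lemma norm_cubeAvg_sub_of_meet (hS : 0 < ∑ i, β i) (α : ℝ) {γ : ℝ} (hγ : 0 < γ)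
    (hγβ : ∀ i, γ ≤ β i) {b : EuclideanSpace ℝ (Fin n) → ℂ} (hb : LocallyIntegrable b volume)
    {Q P : BetaCube n β} (hQP : Q.l ≤ P.l) (hne : (Q.set ∩ P.set).Nonempty) {B : ℝ}
    (hB : ∀ T : BetaCube n β, T.l = dil γ * P.l → osc β α b T ≤ B) :
    ‖cubeAvg Q b - cubeAvg P b‖ ≤
      ((dil γ * P.l / Q.l) ^ (∑ i, β i) + dil γ ^ (∑ i, β i)) * ((dil γ * P.l) ^ α * B) := by
  have hpos : 0 < dil γ * P.l := mul_pos (dil_pos γ) P.l_pos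
  set T : BetaCube n β := ⟨Q.c, dil γ * P.l, hpos⟩ with hT
  have hTl : T.l = dil γ * P.l := rfl
  have hBT := hB T rfl
  have h1 : Q.set ⊆ T.set := BetaCube.set_subset_of_le (fun i => hγ.trans_le (hγβ i)) rfl
    (by rw [hTl]; nlinarith [one_le_dil hγ, P.l_pos])
  have h2 : P.set ⊆ T.set := BetaCube.subset_dil hγ hγβ hQP hne hpos
  have e1 := norm_cubeAvg_sub_cubeAvg_le hS α hb h1
  have e2 := norm_cubeAvg_sub_cubeAvg_le hS α hb h2
  rw [hTl] at e1 e2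
  rw [mul_div_cancel_right₀ _ P.l_pos.ne'] at e2
  have hQl := Q.l_pos
  have hd := dil_pos γ
  have hPl := P.l_pos
  calc ‖cubeAvg Q b - cubeAvg P b‖
      = ‖(cubeAvg Q b - cubeAvg T b) - (cubeAvg P b - cubeAvg T b)‖ := by congr 1; ring
    _ ≤ ‖cubeAvg Q b - cubeAvg T b‖ + ‖cubeAvg P b - cubeAvg T b‖ := norm_sub_le _ _
    _ ≤ (dil γ * P.l / Q.l) ^ (∑ i, β i) * ((dil γ * P.l) ^ α * osc β α b T) +
        dil γ ^ (∑ i, β i) * ((dil γ * P.l) ^ α * osc β α b T) := add_le_add e1 e2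
    _ = ((dil γ * P.l / Q.l) ^ (∑ i, β i) + dil γ ^ (∑ i, β i)) *
        ((dil γ * P.l) ^ α * osc β α b T) := by ring
    _ ≤ _ := by gcongr

/-- Growth of averages: the chain of dyadic dilates of `Q` up to the size of `P` shows that
averages over intersecting cubes of different sizes differ by at most a multiple of
`ℓ(Q)^α (ℓ(P)/ℓ(Q))^γ`. The condition `α < γ` makes the induction over scales contract. -/
lemma exists_cubeAvg_growth (hS : 0 < ∑ i, β i) {α : ℝ} (hα : 0 ≤ α) {γ : ℝ}
    (hγβ : ∀ i, γ ≤ β i) (hαγ : α < γ) {b : EuclideanSpace ℝ (Fin n) → ℂ}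
    (hb : LocallyIntegrable b volume) {M : ℝ} (hM0 : 0 ≤ M)
    (hM : ∀ Q : BetaCube n β, osc β α b Q ≤ M) :
    ∃ C ≥ (0 : ℝ), ∀ P Q : BetaCube n β, Q.l ≤ P.l → (Q.set ∩ P.set).Nonempty →
      ‖cubeAvg Q b - cubeAvg P b‖ ≤ C * (Q.l ^ α * (P.l / Q.l) ^ γ) := by
  have hγ : 0 < γ := hα.trans_lt hαγ
  set S := ∑ i, β i with hSdef
  have hd := dil_pos γ
  set Ca : ℝ := ((dil γ * 2) ^ S + dil γ ^ S) * ((dil γ * 2) ^ α * M) with hCa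
  set Cb : ℝ := 2 ^ S * (2 ^ α * M) with hCb
  set q : ℝ := 2 ^ (α - γ) with hq
  have hq1 : q < 1 := Real.rpow_lt_one_of_one_lt_of_neg (by norm_num) (by linarith)
  have hq0 : 0 < q := by positivity
  have hCa0 : 0 ≤ Ca := by positivity
  have hCb0 : 0 ≤ Cb := by positivity
  set C : ℝ := (Ca + Cb) / (1 - q) with hC
  have hCeq : C * (1 - q) = Ca + Cb := div_mul_cancel₀ _ (by linarith)
  have hC0 : 0 ≤ C := div_nonneg (by positivity) (by linarith)
  have hCaC : Ca ≤ C := by nlinarith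
  have hCbC : Cb + C * q ≤ C := by nlinarith
  refine ⟨C, hC0, fun P Q₀ hQP₀ hne₀ => ?_⟩
  have key : ∀ j : ℕ, ∀ Q : BetaCube n β, P.l ≤ 2 ^ (j + 1) * Q.l → Q.l ≤ P.l →
      (Q.set ∩ P.set).Nonempty →
      ‖cubeAvg Q b - cubeAvg P b‖ ≤ C * (Q.l ^ α * (P.l / Q.l) ^ γ) := by
    have base : ∀ Q : BetaCube n β, P.l ≤ 2 * Q.l → Q.l ≤ P.l → (Q.set ∩ P.set).Nonempty →
        ‖cubeAvg Q b - cubeAvg P b‖ ≤ C * (Q.l ^ α * (P.l / Q.l) ^ γ) := by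
      intro Q h1 h2 hne
      have hQl := Q.l_pos
      have hPl := P.l_pos
      have hle : 1 ≤ (P.l / Q.l) ^ γ := Real.one_le_rpow ((one_le_div hQl).2 h2) hγ.le
      have hle2 : dil γ * P.l / Q.l ≤ dil γ * 2 := by
        rw [div_le_iff₀ hQl]; nlinarith
      calc _ ≤ ((dil γ * P.l / Q.l) ^ S + dil γ ^ S) * ((dil γ * P.l) ^ α * M) :=
            norm_cubeAvg_sub_of_meet hS α hγ hγβ hb h2 hne fun T _ => hM T
        _ ≤ ((dil γ * 2) ^ S + dil γ ^ S) * ((dil γ * (2 * Q.l)) ^ α * M) := by gcongr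
        _ = Ca * Q.l ^ α := by
          rw [← mul_assoc (dil γ) 2 Q.l, Real.mul_rpow (by positivity) hQl.le, hCa]; ring
        _ ≤ C * (Q.l ^ α * (P.l / Q.l) ^ γ) := by
          have := Q.rpow_pos α
          refine mul_le_mul hCaC ?_ this.le hC0
          nlinarith
    intro j
    induction j with
    | zero => intro Q h1; exact base Q (by simpa using h1)
    | succ j ih =>
      intro Q h1 h2 hne
      by_cases h3 : P.l ≤ 2 * Q.l
      · exact base Q h3 h2 hne
      push Not at h3
      have hQl := Q.l_pos
      have hPl := P.l_pos
      set T : BetaCube n β := ⟨Q.c, 2 * Q.l, by positivity⟩ with hT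
      have hTl : T.l = 2 * Q.l := rfl
      have hQT : Q.set ⊆ T.set :=
        BetaCube.set_subset_of_le (fun i => hγ.trans_le (hγβ i)) rfl (by rw [hTl]; linarith)
      have e1 := ih T (by rw [hTl]; rw [pow_succ] at h1; linarith) (by rw [hTl]; exact h3.le)
        (hne.mono (Set.inter_subset_inter_left _ hQT))
      have e2 := norm_cubeAvg_sub_cubeAvg_le hS α hb hQT
      rw [hTl, mul_div_cancel_right₀ _ hQl.ne'] at e2
      rw [hTl] at e1
      have hle : 1 ≤ (P.l / Q.l) ^ γ := Real.one_le_rpow ((one_le_div hQl).2 h2) hγ.le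
      have e3 : (2 * Q.l) ^ α * (P.l / (2 * Q.l)) ^ γ = q * (Q.l ^ α * (P.l / Q.l) ^ γ) := by
        rw [Real.mul_rpow (by norm_num) hQl.le, hq, Real.rpow_sub (by norm_num),
          show P.l / (2 * Q.l) = (P.l / Q.l) / 2 by field_simp,
          Real.div_rpow (by positivity) (by norm_num)]
        ring
      have hQα := Q.rpow_pos α
      calc ‖cubeAvg Q b - cubeAvg P b‖
          ≤ ‖cubeAvg Q b - cubeAvg T b‖ + ‖cubeAvg T b - cubeAvg P b‖ :=
            norm_sub_le_norm_sub_add_norm_sub _ _ _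
        _ ≤ 2 ^ S * ((2 * Q.l) ^ α * osc β α b T) + C * (q * (Q.l ^ α * (P.l / Q.l) ^ γ)) := by
            rw [← e3]; exact add_le_add e2 e1
        _ ≤ 2 ^ S * ((2 * Q.l) ^ α * M) + C * (q * (Q.l ^ α * (P.l / Q.l) ^ γ)) := by
            have := hM T
            gcongr
        _ = Cb * (Q.l ^ α * 1) + C * q * (Q.l ^ α * (P.l / Q.l) ^ γ) := by
            rw [Real.mul_rpow (by norm_num) hQl.le, hCb]; ring
        _ ≤ Cb * (Q.l ^ α * (P.l / Q.l) ^ γ) + C * q * (Q.l ^ α * (P.l / Q.l) ^ γ) := by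
            gcongr
        _ = (Cb + C * q) * (Q.l ^ α * (P.l / Q.l) ^ γ) := by ring
        _ ≤ C * (Q.l ^ α * (P.l / Q.l) ^ γ) := by gcongr
  obtain ⟨j, hj⟩ := pow_unbounded_of_one_lt (P.l / Q₀.l) (one_lt_two (α := ℝ))
  refine key j Q₀ ?_ hQP₀ hne₀
  rw [div_lt_iff₀ Q₀.l_pos] at hj
  rw [pow_succ]
  nlinarith [Q₀.l_pos, pow_pos (two_pos (α := ℝ)) j, mul_pos (pow_pos (two_pos (α := ℝ)) j) Q₀.l_pos]

/-! ### Truncation -/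

/-- A Lipschitz cutoff at scale `R`: it vanishes outside the `β`-cube of size `R` centred at `0`
and equals `1` near the centre. -/
def cutoff (β : Fin n → ℝ) (R : ℝ) (x : EuclideanSpace ℝ (Fin n)) : ℝ :=
  max 0 (min 1 (2 - 4 * ‖fun i => x i / R ^ (β i)‖))

lemma cutoff_nonneg (R : ℝ) (x : EuclideanSpace ℝ (Fin n)) : 0 ≤ cutoff β R x := le_max_left _ _

lemma cutoff_le_one (R : ℝ) (x : EuclideanSpace ℝ (Fin n)) : cutoff β R x ≤ 1 :=
  max_le zero_le_one (min_le_left _ _)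

lemma continuous_cutoff (R : ℝ) : Continuous (cutoff β R) := by
  unfold cutoff
  fun_prop

lemma cutoff_eq_zero {R : ℝ} (hR : 0 < R) {x : EuclideanSpace ℝ (Fin n)}
    (hx : x ∉ (⟨0, R, hR⟩ : BetaCube n β).set) : cutoff β R x = 0 := by
  simp only [BetaCube.set, Set.mem_ofPred_eq, not_forall, not_le] at hx
  obtain ⟨i, hi⟩ := hx
  have h1 : |x i / R ^ (β i)| ≤ ‖fun i => x i / R ^ (β i)‖ :=
    norm_le_pi_norm (fun i => x i / R ^ (β i)) i
  have hp : 0 < R ^ (β i) := by positivity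
  rw [abs_div, abs_of_pos hp, div_le_iff₀ hp] at h1
  simp only [PiLp.zero_apply, sub_zero] at hi
  have h2 : 1 / 2 < ‖fun i => x i / R ^ (β i)‖ := by
    by_contra hcon
    push Not at hcon
    nlinarith
  exact max_eq_left ((min_le_right _ _).trans (by linarith))

lemma cutoff_eq_one {γ : ℝ} (hγ : 0 < γ) (hγβ : ∀ i, γ ≤ β i) {L : ℝ} (hL : 0 < L)
    {x : EuclideanSpace ℝ (Fin n)} (hx : x ∈ (⟨0, L, hL⟩ : BetaCube n β).set) :
    cutoff β (dil γ * L) x = 1 := by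
  have h1 : ‖fun i => x i / (dil γ * L) ^ (β i)‖ ≤ 1 / 4 := by
    refine (pi_norm_le_iff_of_nonneg (by norm_num)).2 fun i => ?_
    have h2 := hx i
    have h3 := three_mul_le_dil_mul_rpow hγ (hγβ i) hL
    have hp : 0 < L ^ (β i) := by positivity
    have hp2 : 0 < (dil γ * L) ^ (β i) := by linarith
    simp only [PiLp.zero_apply, sub_zero] at h2
    rw [Real.norm_eq_abs, abs_div, abs_of_pos hp2, div_le_iff₀ hp2]
    nlinarith
  rw [cutoff, min_eq_left (by linarith), max_eq_right zero_le_one]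

lemma abs_cutoff_sub_le (R : ℝ) (x y : EuclideanSpace ℝ (Fin n)) :
    |cutoff β R x - cutoff β R y| ≤ 4 * ‖fun i => (x i - y i) / R ^ (β i)‖ := by
  have h0 : ∀ s t : ℝ, |max 0 (min 1 s) - max 0 (min 1 t)| ≤ |s - t| := fun s t =>
    (abs_max_sub_max_le_max _ _ _ _).trans <| by
      simpa using abs_min_sub_min_le_max 1 s 1 t
  refine (h0 _ _).trans ?_
  have h1 := abs_norm_sub_norm_le (fun i => y i / R ^ (β i)) (fun i => x i / R ^ (β i))
  have h2 : ((fun i => y i / R ^ (β i)) - fun i => x i / R ^ (β i)) =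
      -fun i => (x i - y i) / R ^ (β i) := by
    ext i
    simp only [Pi.sub_apply, Pi.neg_apply]
    ring
  rw [h2, norm_neg] at h1
  have h3 : (2 - 4 * ‖fun i => x i / R ^ (β i)‖) - (2 - 4 * ‖fun i => y i / R ^ (β i)‖) =
      4 * (‖fun i => y i / R ^ (β i)‖ - ‖fun i => x i / R ^ (β i)‖) := by ring
  rw [h3, abs_mul, abs_of_pos (by norm_num : (0 : ℝ) < 4)]
  linarith

lemma abs_cutoff_sub_center_le {γ : ℝ} (hγβ : ∀ i, γ ≤ β i) {R : ℝ}
    (hR : 0 < R) (Q : BetaCube n β) (hQR : Q.l ≤ R) {x : EuclideanSpace ℝ (Fin n)}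
    (hx : x ∈ Q.set) : |cutoff β R x - cutoff β R Q.c| ≤ 2 * (Q.l / R) ^ γ := by
  refine (abs_cutoff_sub_le R x Q.c).trans ?_
  have hQl := Q.l_pos
  have h1 : ‖fun i => (x i - Q.c i) / R ^ (β i)‖ ≤ (Q.l / R) ^ γ / 2 := by
    refine (pi_norm_le_iff_of_nonneg (by positivity)).2 fun i => ?_
    have h2 := hx i
    have hp : 0 < R ^ (β i) := by positivity
    have h3 : (Q.l / R) ^ (β i) ≤ (Q.l / R) ^ γ :=
      Real.rpow_le_rpow_of_exponent_ge (by positivity) ((div_le_one hR).2 hQR) (hγβ i)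
    rw [Real.div_rpow hQl.le hR.le, div_le_iff₀ hp] at h3
    rw [Real.norm_eq_abs, abs_div, abs_of_pos hp, div_le_iff₀ hp]
    linarith
  linarith

/-- The truncation `χ_R (f - ⟨f⟩_{P})`, where `P` is the `β`-cube of size `R` centred at `0`. -/
def trunc (β : Fin n → ℝ) (f : EuclideanSpace ℝ (Fin n) → ℂ) (R : ℝ) (hR : 0 < R) :
    EuclideanSpace ℝ (Fin n) → ℂ :=
  fun x => (cutoff β R x : ℂ) * (f x - cubeAvg (⟨0, R, hR⟩ : BetaCube n β) f)

lemma norm_trunc_le (f : EuclideanSpace ℝ (Fin n) → ℂ) {R : ℝ} (hR : 0 < R)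
    (x : EuclideanSpace ℝ (Fin n)) :
    ‖trunc β f R hR x‖ ≤ ‖f x - cubeAvg (⟨0, R, hR⟩ : BetaCube n β) f‖ := by
  rw [trunc, norm_mul, Complex.norm_real, Real.norm_of_nonneg (cutoff_nonneg R x)]
  exact mul_le_of_le_one_left (norm_nonneg _) (cutoff_le_one R x)

lemma trunc_eq_zero (f : EuclideanSpace ℝ (Fin n) → ℂ) {R : ℝ} (hR : 0 < R)
    {x : EuclideanSpace ℝ (Fin n)} (hx : x ∉ (⟨0, R, hR⟩ : BetaCube n β).set) :
    trunc β f R hR x = 0 := by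
  rw [trunc, cutoff_eq_zero hR hx, Complex.ofReal_zero, zero_mul]

lemma hasCompactSupport_trunc (f : EuclideanSpace ℝ (Fin n) → ℂ) {R : ℝ} (hR : 0 < R) :
    HasCompactSupport (trunc β f R hR) :=
  HasCompactSupport.intro (⟨0, R, hR⟩ : BetaCube n β).isCompact_set fun _ hx =>
    trunc_eq_zero f hR hx

lemma locallyIntegrable_trunc {f : EuclideanSpace ℝ (Fin n) → ℂ}
    (hf : LocallyIntegrable f volume) {R : ℝ} (hR : 0 < R) :
    LocallyIntegrable (trunc β f R hR) volume := by
  have h := hf.sub (locallyIntegrable_const (cubeAvg (⟨0, R, hR⟩ : BetaCube n β) f))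
  refine h.mono ?_ (Filter.Eventually.of_forall fun x => norm_trunc_le f hR x)
  exact (Complex.continuous_ofReal.comp (continuous_cutoff R)).aestronglyMeasurable.mul
    h.aestronglyMeasurable

/-- A function that deviates from a constant no more than `f` from its average, up to an error
`D ℓ(Q)^α`, has oscillation comparable to that of `f`. -/
lemma osc_le_of_norm_le (hS : 0 < ∑ i, β i) (α : ℝ) {b f : EuclideanSpace ℝ (Fin n) → ℂ}
    (hb : LocallyIntegrable b volume) (hf : LocallyIntegrable f volume) (Q : BetaCube n β)
    (a : ℂ) {D : ℝ} (h : ∀ x ∈ Q.set, ‖b x - a‖ ≤ ‖f x - cubeAvg Q f‖ + D * Q.l ^ α) :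
    osc β α b Q ≤ 2 * (osc β α f Q + D) := by
  refine (osc_le_const hS α hb Q a).trans (mul_le_mul_of_nonneg_left ?_ zero_le_two)
  have hV := Q.rpow_pos (∑ i, β i)
  have hα := Q.rpow_pos (-α)
  have hc : IntegrableOn (fun _ : EuclideanSpace ℝ (Fin n) => D * Q.l ^ α) Q.set :=
    integrableOn_const Q.isCompact_set.measure_ne_top
  have h1 := setIntegral_mono_on (Q.integrableOn_sub_const hb a)
    ((Q.integrableOn_sub_const hf (cubeAvg Q f)).add hc) Q.measurableSet_set h
  simp only [Pi.add_apply] at h1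
  rw [integral_add (Q.integrableOn_sub_const hf (cubeAvg Q f)) hc,
    setIntegral_const, Q.volume_real_set, smul_eq_mul] at h1
  rw [osc_eq hS α f]
  calc _ ≤ Q.l ^ (-α) * ((Q.l ^ (∑ i, β i))⁻¹ *
        ((∫ x in Q.set, ‖f x - cubeAvg Q f‖) + Q.l ^ (∑ i, β i) * (D * Q.l ^ α))) := by gcongr
    _ = Q.l ^ (-α) * ((Q.l ^ (∑ i, β i))⁻¹ * (∫ x in Q.set, ‖f x - cubeAvg Q f‖)) +
        D * (Q.l ^ (-α) * Q.l ^ α) := by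
      rw [mul_add (Q.l ^ (∑ i, β i))⁻¹, inv_mul_cancel_left₀ hV.ne']; ring
    _ = _ := by rw [← Real.rpow_add Q.l_pos]; simp

/-- Truncations are bounded in `BMO^{β,α}` uniformly in the truncation scale. -/
lemma exists_osc_trunc_le (hS : 0 < ∑ i, β i) {α : ℝ} (hα : 0 ≤ α) {γ : ℝ}
    (hγβ : ∀ i, γ ≤ β i) (hαγ : α < γ) {f : EuclideanSpace ℝ (Fin n) → ℂ}
    (hf : LocallyIntegrable f volume) {M : ℝ} (hM0 : 0 ≤ M)
    (hM : ∀ Q : BetaCube n β, osc β α f Q ≤ M) :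
    ∃ C ≥ (0 : ℝ), ∀ (R : ℝ) (hR : 0 < R) (Q : BetaCube n β),
      osc β α (trunc β f R hR) Q ≤ C := by
  obtain ⟨C₁, hC₁, H⟩ := exists_cubeAvg_growth hS hα hγβ hαγ hf hM0 hM
  refine ⟨2 * (M + 2 * C₁), by positivity, fun R hR Q => ?_⟩
  set P : BetaCube n β := ⟨0, R, hR⟩ with hP
  have hPl : P.l = R := rfl
  have ht := locallyIntegrable_trunc (β := β) hf hR
  have hQl := Q.l_pos
  by_cases hne : (Q.set ∩ P.set).Nonempty
  swap
  · refine (osc_le_of_forall hS α ht Q 0 (D := 0) fun x hx => ?_).trans (by simp; positivity)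
    rw [trunc_eq_zero f hR fun hxP => hne ⟨x, hx, hxP⟩]
    simp
  by_cases hlR : Q.l ≤ R
  · refine (osc_le_of_norm_le hS α ht hf Q
      ((cutoff β R Q.c : ℂ) * (cubeAvg Q f - cubeAvg P f)) (D := 2 * C₁)
      fun x hx => ?_).trans (by linarith [hM Q])
    have e1 := H P Q hlR hne
    have e2 := abs_cutoff_sub_center_le hγβ hR Q hlR hx
    rw [hPl] at e1
    have e3 : trunc β f R hR x - (cutoff β R Q.c : ℂ) * (cubeAvg Q f - cubeAvg P f) =
        (cutoff β R x : ℂ) * (f x - cubeAvg Q f) +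
        ((cutoff β R x - cutoff β R Q.c : ℝ) : ℂ) * (cubeAvg Q f - cubeAvg P f) := by
      rw [trunc]; push_cast; ring
    rw [e3]
    refine (norm_add_le _ _).trans (add_le_add ?_ ?_)
    · rw [norm_mul, Complex.norm_real, Real.norm_of_nonneg (cutoff_nonneg R x)]
      exact mul_le_of_le_one_left (norm_nonneg _) (cutoff_le_one R x)
    · rw [norm_mul, Complex.norm_real, Real.norm_eq_abs]
      calc _ ≤ 2 * (Q.l / R) ^ γ * (C₁ * (Q.l ^ α * (R / Q.l) ^ γ)) := by gcongr
        _ = 2 * C₁ * Q.l ^ α * ((Q.l / R) ^ γ * (R / Q.l) ^ γ) := by ring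
        _ = 2 * C₁ * Q.l ^ α := by
          rw [← Real.mul_rpow (by positivity) (by positivity),
            show Q.l / R * (R / Q.l) = 1 by field_simp, Real.one_rpow, mul_one]
  · push Not at hlR
    -- on a cube larger than the support, only the `L¹` norm over `P` matters
    refine (osc_le_const hS α ht Q 0).trans (mul_le_mul_of_nonneg_left ?_ zero_le_two)
    have hi : Integrable (P.set.indicator fun x => ‖f x - cubeAvg P f‖) volume :=
      (P.integrableOn_sub_const hf _).integrable_indicator P.measurableSet_set
    have h1 : ∫ x in Q.set, ‖trunc β f R hR x - 0‖ ≤ ∫ x in P.set, ‖f x - cubeAvg P f‖ := by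
      rw [← integral_indicator P.measurableSet_set]
      refine le_trans ?_ (setIntegral_le_integral (s := Q.set) hi
        (Filter.Eventually.of_forall fun x => Set.indicator_nonneg (fun _ _ => norm_nonneg _) x))
      refine setIntegral_mono (Q.integrableOn_sub_const ht 0) hi.integrableOn fun x => ?_
      simp only [sub_zero]
      by_cases hx : x ∈ P.set
      · rw [Set.indicator_of_mem hx]
        exact norm_trunc_le f hR x
      · rw [Set.indicator_of_notMem hx, trunc_eq_zero f hR hx, norm_zero]
    have hV := Q.rpow_pos (∑ i, β i)
    have hV' := P.rpow_pos (∑ i, β i)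
    have h2 := mean_eq_osc hS α f P
    rw [inv_mul_eq_iff_eq_mul₀ hV'.ne'] at h2
    rw [h2, hPl] at h1
    have h3 : R ^ (∑ i, β i) ≤ Q.l ^ (∑ i, β i) := Real.rpow_le_rpow hR.le hlR.le hS.le
    have h4 : R ^ α ≤ Q.l ^ α := Real.rpow_le_rpow hR.le hlR.le hα
    have hQα := Q.rpow_pos (-α)
    have hQα' := Q.rpow_pos α
    calc _ ≤ Q.l ^ (-α) * ((Q.l ^ (∑ i, β i))⁻¹ * (R ^ (∑ i, β i) * (R ^ α * osc β α f P))) := by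
          gcongr
      _ ≤ Q.l ^ (-α) * ((Q.l ^ (∑ i, β i))⁻¹ * (Q.l ^ (∑ i, β i) * (Q.l ^ α * M))) := by
          have := hM P
          have := osc_nonneg α f P
          gcongr
      _ = M := by
          rw [inv_mul_cancel_left₀ hV.ne', ← mul_assoc, ← Real.rpow_add Q.l_pos]
          simp
      _ ≤ M + 2 * C₁ := by linarith

/-! ### Averaging local approximants: the case `α < min β` -/

/-- Approximation with a uniform global bound and arbitrary precision on a compact family of
cubes. The constant `C` depends neither on the family nor on the precision. -/
lemma exists_local_approx (hS : 0 < ∑ i, β i) {α : ℝ} (hα : 0 ≤ α) {γ : ℝ}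
    (hγβ : ∀ i, γ ≤ β i) (hαγ : α < γ) {f : EuclideanSpace ℝ (Fin n) → ℂ}
    (hf : LocallyIntegrable f volume) {M : ℝ} (hM0 : 0 ≤ M)
    (hM : ∀ Q : BetaCube n β, osc β α f Q ≤ M) :
    ∃ C ≥ (0 : ℝ), ∀ r > (0 : ℝ), ∀ R > (0 : ℝ), ∀ ρ > (0 : ℝ), ∀ ε > (0 : ℝ),
      ∃ g : EuclideanSpace ℝ (Fin n) → ℂ, ContDiff ℝ (⊤ : ℕ∞) g ∧ HasCompactSupport g ∧
        (∀ Q : BetaCube n β, osc β α (f - g) Q ≤ C) ∧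
        ∀ Q : BetaCube n β, r ≤ Q.l → Q.l ≤ R → ‖Q.c‖ ≤ ρ → osc β α (f - g) Q ≤ ε := by
  have hγ : 0 < γ := hα.trans_lt hαγ
  obtain ⟨C, hC, HC⟩ := exists_osc_trunc_le hS hα hγβ hαγ hf hM0 hM
  refine ⟨M + 2 * C, by positivity, fun r hr R hR ρ hρ ε hε => ?_⟩
  obtain ⟨L, hL, hLβ⟩ : ∃ L > (0 : ℝ), ∀ i, 2 * ρ + R ^ (β i) ≤ L ^ (β i) := by
    have h1 : ∀ᶠ L : ℝ in Filter.atTop, ∀ i, 2 * ρ + R ^ (β i) ≤ L ^ (β i) :=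
      Filter.eventually_all.2 fun i =>
        (tendsto_rpow_atTop (hγ.trans_le (hγβ i))).eventually_ge_atTop _
    exact ((Filter.eventually_gt_atTop 0).and h1).exists
  set P : BetaCube n β := ⟨0, L, hL⟩ with hP
  have hsub : ∀ Q : BetaCube n β, Q.l ≤ R → ‖Q.c‖ ≤ ρ → Q.set ⊆ P.set := by
    intro Q hQR hQρ x hx i
    have h1 := hx i
    have h2 : |Q.c i| ≤ ρ := (PiLp.norm_apply_le Q.c i).trans hQρ
    have h3 := hLβ i
    have h4 := Real.rpow_le_rpow Q.l_pos.le hQR (hγ.le.trans (hγβ i))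
    simp only [hP, PiLp.zero_apply, sub_zero]
    rw [abs_le] at h1 h2 ⊢
    constructor <;> linarith [h1.1, h1.2, h2.1, h2.2]
  have hdL : 0 < dil γ * L := mul_pos (dil_pos γ) hL
  set h := trunc β f (dil γ * L) hdL with hh
  have hhl : LocallyIntegrable h volume := locallyIntegrable_trunc hf hdL
  set K : ℝ := 2 * (L / r) ^ (α + ∑ i, β i) with hK
  have hKpos : 0 < K := by positivity
  obtain ⟨δ, hδ, Hδ⟩ := exists_mollify_close hS α hhl P (ε := ε / K) (by positivity)
  set φ : ContDiffBump (0 : EuclideanSpace ℝ (Fin n)) := ⟨δ / 2, δ, by positivity, by linarith⟩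
  have hml := locallyIntegrable_mollify φ hhl
  refine ⟨mollify φ h, contDiff_mollify φ hhl,
    hasCompactSupport_mollify φ (hasCompactSupport_trunc f hdL), fun Q => ?_,
    fun Q hrQ hQR hQρ => ?_⟩
  · refine (osc_sub_le hS α hf hml Q).trans (add_le_add (hM Q) ?_)
    exact osc_mollify_le hS α φ hhl Q fun v _ => HC _ _ _
  · have hQP := hsub Q hQR hQρ
    have e1 : osc β α (f - h) Q ≤ 2 * (Q.l ^ (-α) * 0) := by
      refine osc_le_of_forall hS α (hf.sub hhl) Q
        (cubeAvg (⟨0, dil γ * L, hdL⟩ : BetaCube n β) f) fun x hx => ?_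
      rw [Pi.sub_apply, hh, trunc, cutoff_eq_one hγ hγβ hL (hQP hx)]
      simp
    have e2 : osc β α (h - mollify φ h) Q ≤ ε := by
      refine (osc_mono hS α (hhl.sub hml) hQP).trans ?_
      have h3 := Hδ φ le_rfl
      rw [le_div_iff₀ hKpos, mul_comm] at h3
      refine le_trans (mul_le_mul_of_nonneg_right ?_ (osc_nonneg _ _ _)) h3
      have := Q.l_pos
      have hPl : P.l = L := rfl
      rw [hPl, hK]
      gcongr
    have e3 : f - mollify φ h = (f - h) + (h - mollify φ h) := by abel
    rw [e3]
    refine (osc_add_le hS α (hf.sub hhl) (hhl.sub hml) Q).trans ?_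
    linarith

/-- The case `α < min β`. Successive local approximants are chosen so that their errors are large
on disjoint families of cubes only; the average of `N` of them then has error at most
`C / N + ε / 2`. -/
lemma exists_approx_of_lt (hS : 0 < ∑ i, β i) (hβ : ∀ i, 0 < β i) {α : ℝ} (hα : 0 ≤ α) {γ : ℝ}
    (hγβ : ∀ i, γ ≤ β i) (hαγ : α < γ) {f : EuclideanSpace ℝ (Fin n) → ℂ}
    (hf : MemVMO β α f) {ε : ℝ} (hε : 0 < ε) :
    ∃ g : EuclideanSpace ℝ (Fin n) → ℂ, ContDiff ℝ (⊤ : ℕ∞) g ∧ HasCompactSupport g ∧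
      ∀ Q : BetaCube n β, osc β α (f - g) Q ≤ ε := by
  have hfl := hf.1
  have hfv := hf.vanishesOff hS hβ hα
  obtain ⟨M, hM⟩ := hf.2.1
  obtain ⟨C, hC, HC⟩ := exists_local_approx hS hα hγβ hαγ hfl (le_max_left 0 M)
    fun Q => (hM Q).trans (le_max_right _ _)
  -- `G` is the sum of the first `N` approximants; each cube is bad for at most one of them
  have key : ∀ N : ℕ, ∃ G : EuclideanSpace ℝ (Fin n) → ℂ, ContDiff ℝ (⊤ : ℕ∞) G ∧
      HasCompactSupport G ∧ ∀ Q : BetaCube n β,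
        osc β α ((N : ℝ) • f - G) Q ≤ C + N * (ε / 2) := by
    intro N
    induction N with
    | zero =>
      refine ⟨0, contDiff_const, HasCompactSupport.zero, fun Q => ?_⟩
      have h0 : ((0 : ℕ) : ℝ) • f - 0 = (0 : ℝ) • f := by simp
      rw [h0, osc_smul]
      simpa using hC
    | succ N ih =>
      obtain ⟨G, hG, hGc, HG⟩ := ih
      have hGl : LocallyIntegrable G volume := hG.continuous.locallyIntegrable
      have hbl : LocallyIntegrable ((N : ℝ) • f - G) volume := (hfl.smul _).sub hGl
      have hbv : VanishesOff β α ((N : ℝ) • f - G) := by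
        have := VanishesOff.add hS (hfl.smul (N : ℝ)) (hGl.smul (-1 : ℝ)) (hfv.smul (N : ℝ))
          ((vanishesOff_of_contDiff hS hβ hα hγβ hαγ hG hGc).smul (-1))
        simpa [sub_eq_add_neg] using this
      obtain ⟨r, hr, R, hR, ρ, hρ, H⟩ := hbv (ε / 2) (by positivity)
      obtain ⟨g, hg, hgc, H1, H2⟩ := HC r hr R hR ρ hρ (ε / 2) (by positivity)
      have hgl : LocallyIntegrable g volume := hg.continuous.locallyIntegrable
      refine ⟨G + g, hG.add hg, hGc.add hgc, fun Q => ?_⟩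
      have e : ((N + 1 : ℕ) : ℝ) • f - (G + g) = ((N : ℝ) • f - G) + (f - g) := by
        push_cast
        rw [add_smul, one_smul]
        abel
      rw [e]
      refine (osc_add_le hS α hbl (hfl.sub hgl) Q).trans ?_
      push_cast
      have hN : (0 : ℝ) ≤ N * (ε / 2) := by positivity
      by_cases hQ : Q.l ≤ r ∨ R ≤ Q.l ∨ ρ ≤ ‖Q.c‖
      · have := H Q hQ
        have := H1 Q
        linarith
      · push Not at hQ
        have := HG Q
        have := H2 Q hQ.1.le hQ.2.1.le hQ.2.2.le
        linarith
  obtain ⟨N, hN⟩ := exists_nat_gt (C / (ε / 2))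
  have hN0 : (0 : ℝ) < N := lt_of_le_of_lt (by positivity) hN
  obtain ⟨G, hG, hGc, HG⟩ := key N
  refine ⟨(N : ℝ)⁻¹ • G, contDiff_const.smul hG, ?_, fun Q => ?_⟩
  · exact hGc.smul_left (f := fun _ => (N : ℝ)⁻¹)
  · have e : f - (N : ℝ)⁻¹ • G = (N : ℝ)⁻¹ • ((N : ℝ) • f - G) := by
      rw [smul_sub, smul_smul, inv_mul_cancel₀ hN0.ne', one_smul]
    rw [e, osc_smul, abs_of_pos (by positivity), inv_mul_le_iff₀ hN0]
    have := HG Q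
    rw [div_lt_iff₀ (by positivity)] at hN
    linarith

/-! ### Rigidity: the case `β i ≤ α` -/

/-- If `β i ≤ α`, small-scale vanishing forces a continuous function to be constant in the `i`-th
direction: a step of length `s ^ β i` costs `o(s ^ α)`, and `t / s ^ β i` steps cover the
distance `t`. -/
lemma eq_of_small_osc (hS : 0 < ∑ i, β i) (α : ℝ) {γ : ℝ} (hγ : 0 < γ) (hγβ : ∀ i, γ ≤ β i)
    {i : Fin n} (hi : β i ≤ α) {F : EuclideanSpace ℝ (Fin n) → ℂ} (hF : Continuous F)
    (hsm : ∀ ε > (0 : ℝ), ∃ r > (0 : ℝ), ∀ Q : BetaCube n β, Q.l ≤ r → osc β α F Q ≤ ε)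
    (x : EuclideanSpace ℝ (Fin n)) {t : ℝ} (ht : 0 < t) :
    F (x + t • EuclideanSpace.single i (1 : ℝ)) = F x := by
  set e : EuclideanSpace ℝ (Fin n) := EuclideanSpace.single i (1 : ℝ) with he
  have hFl : LocallyIntegrable F volume := hF.locallyIntegrable
  have hd := dil_pos γ
  have hβi : 0 < β i := hγ.trans_le (hγβ i)
  set C : ℝ := (dil γ ^ (∑ i, β i) + dil γ ^ (∑ i, β i)) * dil γ ^ α with hC
  have hC0 : 0 < C := by positivity
  -- averages over cubes shrinking to `y` converge to `F y`
  have hclose : ∀ y : EuclideanSpace ℝ (Fin n), ∀ η > (0 : ℝ), ∀ᶠ s : ℝ in nhds 0,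
      ∀ hs : 0 < s, ‖cubeAvg (⟨y, s, hs⟩ : BetaCube n β) F - F y‖ ≤ η := by
    intro y η hη
    obtain ⟨δ, hδ, hδF⟩ := Metric.continuous_iff.1 hF y η hη
    have ht0 : Filter.Tendsto (fun s : ℝ => ∑ j, s ^ (β j)) (nhds 0) (nhds 0) := by
      have hcont : ContinuousAt (fun s : ℝ => ∑ j, s ^ (β j)) 0 :=
        tendsto_finsetSum _ fun j _ =>
          Real.continuousAt_rpow_const 0 (β j) (Or.inr (hγ.le.trans (hγβ j)))
      have := hcont.tendsto
      simpa [Real.zero_rpow (hγ.trans_le (hγβ _)).ne'] using this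
    filter_upwards [ht0.eventually_lt_const hδ] with s hsδ hs
    refine norm_cubeAvg_sub_le_of_forall _ hFl _ fun z hz => ?_
    rw [← dist_eq_norm]
    refine (hδF z ?_).le
    rw [dist_eq_norm]
    exact (BetaCube.norm_sub_center_le _ hz).trans_lt hsδ
  have main : ∀ η > (0 : ℝ), ‖F (x + t • e) - F x‖ ≤ (2 + C * t) * η := by
    intro η hη
    obtain ⟨r, hr, Hr⟩ := hsm η hη
    have hlim : Filter.Tendsto (fun N : ℕ => (t / N) ^ (1 / β i)) Filter.atTop (nhds 0) := by
      have h1 : Filter.Tendsto (fun N : ℕ => t / (N : ℝ)) Filter.atTop (nhds 0) :=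
        tendsto_const_div_atTop_nhds_zero_nat t
      have h2 := h1.rpow_const (p := 1 / β i) (Or.inr (by positivity))
      rwa [Real.zero_rpow (by positivity)] at h2
    obtain ⟨N, h1, h2, h3, h4, hN⟩ := ((hlim.eventually (hclose x η hη)).and
      ((hlim.eventually (hclose (x + t • e) η hη)).and
      ((hlim.eventually (ge_mem_nhds (show (0 : ℝ) < 1 by norm_num))).and
      ((hlim.eventually (ge_mem_nhds (show (0 : ℝ) < r / dil γ by positivity))).and
      (Filter.eventually_gt_atTop 0))))).exists
    have hN' : (0 : ℝ) < N := by exact_mod_cast hN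
    set s : ℝ := (t / N) ^ (1 / β i) with hs
    have hspos : 0 < s := by positivity
    have hsβ : s ^ (β i) = t / N := by
      rw [hs, ← Real.rpow_mul (by positivity), one_div_mul_cancel hβi.ne', Real.rpow_one]
    have hsα : s ^ α ≤ t / N := by
      rw [← hsβ]; exact Real.rpow_le_rpow_of_exponent_ge hspos h3 hi
    have hstep : ∀ y : EuclideanSpace ℝ (Fin n),
        ‖cubeAvg (⟨y + s ^ (β i) • e, s, hspos⟩ : BetaCube n β) F -
          cubeAvg (⟨y, s, hspos⟩ : BetaCube n β) F‖ ≤ C * (s ^ α * η) := by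
      intro y
      have hmeet : ((⟨y + s ^ (β i) • e, s, hspos⟩ : BetaCube n β).set ∩
          (⟨y, s, hspos⟩ : BetaCube n β).set).Nonempty := by
        refine ⟨y + (s ^ (β i) / 2) • e, fun j => ?_, fun j => ?_⟩
        all_goals
          have hsj : 0 < s ^ (β j) := by positivity
          by_cases hj : j = i
          · subst hj
            simp only [he, PiLp.add_apply, PiLp.smul_apply, PiLp.single_apply, if_true,
              smul_eq_mul, mul_one]
            rw [abs_le]
            constructor <;> linarith
          · simp [he, hj]
            positivity
      refine (norm_cubeAvg_sub_of_meet hS α hγ hγβ hFl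
        (Q := (⟨y + s ^ (β i) • e, s, hspos⟩ : BetaCube n β))
        (P := (⟨y, s, hspos⟩ : BetaCube n β)) (le_refl s) hmeet (B := η)
        fun T hT => Hr T ?_).trans (le_of_eq ?_)
      · rw [hT]
        rw [le_div_iff₀ hd] at h4
        linarith
      · simp only
        rw [mul_div_cancel_right₀ _ hspos.ne', Real.mul_rpow hd.le hspos.le, hC]
        ring
    have hchain : ∀ k : ℕ, ‖cubeAvg (⟨x + (k * s ^ (β i)) • e, s, hspos⟩ : BetaCube n β) F -
          cubeAvg (⟨x, s, hspos⟩ : BetaCube n β) F‖ ≤ k * (C * (s ^ α * η)) := by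
      intro k
      induction k with
      | zero => simp
      | succ k ih =>
        have h5 := hstep (x + (k * s ^ (β i)) • e)
        rw [add_assoc, ← add_smul, show (k : ℝ) * s ^ (β i) + s ^ (β i) =
          ((k + 1 : ℕ) : ℝ) * s ^ (β i) by push_cast; ring] at h5
        refine (norm_sub_le_norm_sub_add_norm_sub _
          (cubeAvg (⟨x + (k * s ^ (β i)) • e, s, hspos⟩ : BetaCube n β) F) _).trans ?_
        push_cast at h5 ih ⊢
        linarith
    have h6 := hchain N
    rw [hsβ, mul_div_cancel₀ _ hN'.ne'] at h6
    have h7 : N * (C * (s ^ α * η)) ≤ C * t * η := by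
      calc N * (C * (s ^ α * η)) = N * s ^ α * (C * η) := by ring
        _ ≤ N * (t / N) * (C * η) := by gcongr
        _ = C * t * η := by field_simp
    have h8 := h1 hspos
    have h9 := h2 hspos
    set A := cubeAvg (⟨x, s, hspos⟩ : BetaCube n β) F
    set B := cubeAvg (⟨x + t • e, s, hspos⟩ : BetaCube n β) F
    calc ‖F (x + t • e) - F x‖ = ‖(B - A) - (B - F (x + t • e)) + (A - F x)‖ := by
          congr 1; ring
      _ ≤ ‖B - A‖ + ‖B - F (x + t • e)‖ + ‖A - F x‖ :=
          (norm_add_le _ _).trans (add_le_add_left (norm_sub_le _ _) _)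
      _ ≤ (2 + C * t) * η := by linarith
  rw [← sub_eq_zero, ← norm_eq_zero]
  refine le_antisymm (le_of_forall_pos_le_add fun η hη => ?_) (norm_nonneg _)
  have := main (η / (2 + C * t)) (by positivity)
  rwa [mul_div_cancel₀ _ (by positivity), ← zero_add η] at this

/-- If `β i ≤ α` for some `i`, then functions in `VMO^{β,α}` have zero oscillation: invariance of
their mollifications in the `i`-th direction lets every cube be moved to infinity. -/
lemma osc_le_of_le (hS : 0 < ∑ i, β i) (α : ℝ) {γ : ℝ} (hγ : 0 < γ) (hγβ : ∀ i, γ ≤ β i)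
    {i : Fin n} (hi : β i ≤ α) {f : EuclideanSpace ℝ (Fin n) → ℂ} (hf : MemVMO β α f)
    (Q : BetaCube n β) {ε : ℝ} (hε : 0 < ε) : osc β α f Q ≤ ε := by
  obtain ⟨hfl, -, hsm, -, hfar⟩ := hf
  obtain ⟨δ, hδ, Hδ⟩ := exists_mollify_close hS α hfl Q (ε := ε / 2) (by positivity)
  set φ : ContDiffBump (0 : EuclideanSpace ℝ (Fin n)) := ⟨δ / 2, δ, by positivity, by linarith⟩
  have hclose := Hδ φ le_rfl
  have hml := locallyIntegrable_mollify φ hfl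
  set F := mollify φ f with hF
  have hFsm : ∀ ε > (0 : ℝ), ∃ r > (0 : ℝ), ∀ Q : BetaCube n β, Q.l ≤ r → osc β α F Q ≤ ε := by
    intro ε' hε'
    obtain ⟨r, hr, H⟩ := hsm (ε' / 2) (by positivity)
    refine ⟨r, hr, fun T hT => ?_⟩
    have := osc_mollify_le hS α φ hfl T (B := ε' / 2) fun v _ => H _ hT
    linarith
  obtain ⟨R, HR⟩ := hfar Q (ε / 4) (by positivity)
  set e : EuclideanSpace ℝ (Fin n) := EuclideanSpace.single i (1 : ℝ) with he
  have hnorm : ‖e‖ = 1 := by simp [he]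
  set t : ℝ := |R| + δ + 1 with ht
  have htpos : 0 < t := by positivity
  have hinv : (fun x => F (x - (-(t • e)))) = F := by
    ext x
    rw [sub_neg_eq_add]
    exact eq_of_small_osc hS α hγ hγβ hi (contDiff_mollify φ hfl).continuous hFsm x htpos
  have h1 : osc β α F Q ≤ ε / 2 := by
    rw [← hinv, osc_shift hS, neg_neg]
    have := osc_mollify_le hS α φ hfl (Q.translate (t • e)) (B := ε / 4) fun v hv => by
      have e1 : (Q.translate (t • e)).translate v = Q.translate (t • e + v) := by
        simp only [BetaCube.translate, add_assoc]
      rw [e1]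
      refine HR _ ?_
      have h2 : ‖t • e‖ ≤ ‖t • e + v‖ + ‖v‖ := norm_le_add_norm_add _ _
      rw [norm_smul, hnorm, mul_one, Real.norm_of_nonneg htpos.le] at h2
      have h3 : ‖v‖ ≤ δ := hv
      linarith [le_abs_self R]
    linarith
  have e2 : f = (f - F) + F := by abel
  rw [e2]
  refine (osc_add_le hS α (hfl.sub hml) hml Q).trans ?_
  linarith

end Aux

/-- **Density of `C_c^∞` in `VMO^{β,α}`.** For `β ∈ (0,∞)^n` and `α ≥ 0`, every
`f ∈ VMO^{β,α}(ℝⁿ)` can be approximated in the `BMO^{β,α}` seminorm by smooth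
compactly supported functions. -/
theorem vmo_subset_closure_smooth_compactly_supported
    (n : ℕ) (hn : 1 ≤ n) (β : Fin n → ℝ) (hβ : ∀ i, 0 < β i) (α : ℝ) (hα : 0 ≤ α)
    (f : EuclideanSpace ℝ (Fin n) → ℂ) (hf : MemVMO β α f) :
    ∀ ε > (0:ℝ), ∃ g : EuclideanSpace ℝ (Fin n) → ℂ,
      ContDiff ℝ (⊤ : ℕ∞) g ∧ HasCompactSupport g ∧
      ∀ Q : BetaCube n β, osc β α (f - g) Q ≤ ε := by
  intro ε hε
  have : Nonempty (Fin n) := ⟨⟨0, hn⟩⟩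
  have hS : 0 < ∑ i, β i := Finset.sum_pos (fun i _ => hβ i) Finset.univ_nonempty
  obtain ⟨i₀, hi₀⟩ := Finite.exists_min β
  by_cases h : α < β i₀
  · exact exists_approx_of_lt hS hβ hα hi₀ h hf hε
  · refine ⟨0, contDiff_const, HasCompactSupport.zero, fun Q => ?_⟩
    rw [sub_zero]
    exact osc_le_of_le hS α (hβ i₀) hi₀ (not_lt.1 h) hf Q hε

end
end

section
/- Let n≥1 and 0<α<1, and take β=(1,…,1) (so β-cubes are ordinary axis-parallel cubes). A locally integrable f:ℝ^n→ℂ with ‖f‖_{BMO^{1,α}}<∞ belongs to VMO^{1,α}(ℝ^n) if and only if for every ε>0 there exists g∈C_c^∞(ℝ^n) with ‖f−g‖_{BMO^{1,α}}≤ε. -/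
/-!
For `0 < α < 1` the space `BMO^{1,α}` consists of Hölder continuous functions, and the proof moves
everything to pointwise estimates, stated between Lebesgue points so that no continuous
representative of `f` has to be chosen.

*From vanishing to approximation.* Campanato's telescoping argument (`norm_mean_sub_apply_le`,
`exists_norm_sub_le`) converts the vanishing conditions into two facts: for each `δ > 0`,
`‖f x - f y‖ ≤ δ ‖x - y‖ ^ α` holds when `‖x - y‖` is small (`small_scale`), and also when `‖x‖` is
large, with no restriction on `y` (`far_away`). Let `r` be the scale given by the first fact and `u`
the mollification of `f` at scale `r`. Then `f - u` has Hölder constant at most `2 δ`: below scale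
`r` both terms are controlled, and above it `f - u` is uniformly bounded by `δ r ^ α`. The second
fact passes to `u` and lets one cut off `u - u 0` at a large radius `N` (`truncation`): where the
cutoff varies, `u - u 0` has size at most `2 δ N ^ α`, which the cutoff's Hölder constant
`≲ N ^ (-α)` compensates. A Hölder bound controls the oscillation over cubes (`meanOsc_le_of_ae`).

*From approximation to vanishing.* A smooth compactly supported function is bounded, Lipschitz and
zero far away, so it satisfies the three conditions (`vanishing_of_smooth`), and these are stable
under approximation in the seminorm (`meanOsc_le_add`).
-/

open MeasureTheory

noncomputable section

namespace VMOApprox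

open Filter Topology Metric

variable {n : ℕ}

/-! ### Cubes, means and mean oscillations -/

/-- The closed axis-parallel cube with centre `x` and side length `l`. -/
def cube (x : EuclideanSpace ℝ (Fin n)) (l : ℝ) : Set (EuclideanSpace ℝ (Fin n)) :=
  {z | ∀ i, |z i - x i| ≤ l / 2}

/-- The mean of `f` over `cube x l`. -/
def mean (f : EuclideanSpace ℝ (Fin n) → ℂ) (x : EuclideanSpace ℝ (Fin n)) (l : ℝ) : ℂ :=
  ⨍ z in cube x l, f z

/-- The (unweighted) mean oscillation of `f` over `cube x l`. -/
def meanOsc (f : EuclideanSpace ℝ (Fin n) → ℂ) (x : EuclideanSpace ℝ (Fin n)) (l : ℝ) : ℝ :=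
  ⨍ z in cube x l, ‖f z - mean f x l‖

lemma cube_eq_preimage (x : EuclideanSpace ℝ (Fin n)) {l : ℝ} (hl : 0 < l) :
    cube x l = WithLp.ofLp ⁻¹' closedBall (WithLp.ofLp x) (l / 2) := by
  ext z
  simp only [cube, Set.mem_ofPred_eq, Set.mem_preimage, mem_closedBall]
  rw [dist_pi_le_iff (by positivity)]
  simp [Real.dist_eq]

lemma isCompact_cube (x : EuclideanSpace ℝ (Fin n)) {l : ℝ} (hl : 0 < l) :
    IsCompact (cube x l) := by
  rw [cube_eq_preimage x hl]
  exact (PiLp.homeomorph 2 (fun _ : Fin n => ℝ)).isCompact_preimage.2 (isCompact_closedBall _ _)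

lemma measurableSet_cube (x : EuclideanSpace ℝ (Fin n)) {l : ℝ} (hl : 0 < l) :
    MeasurableSet (cube x l) := (isCompact_cube x hl).measurableSet

lemma volume_cube (x : EuclideanSpace ℝ (Fin n)) {l : ℝ} (hl : 0 < l) :
    volume.real (cube x l) = l ^ n := by
  rw [cube_eq_preimage x hl, Measure.real,
    (PiLp.volume_preserving_ofLp (Fin n)).measure_preimage
      measurableSet_closedBall.nullMeasurableSet,
    Real.volume_pi_closedBall _ (by positivity), ENNReal.toReal_ofReal (by positivity)]
  simp [mul_div_cancel₀]

lemma mem_cube_self (x : EuclideanSpace ℝ (Fin n)) {l : ℝ} (hl : 0 < l) : x ∈ cube x l := by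
  intro i
  simp
  positivity

lemma cube_subset {x y : EuclideanSpace ℝ (Fin n)} {l l' : ℝ} (h : 2 * ‖x - y‖ + l ≤ l') :
    cube x l ⊆ cube y l' := by
  intro z hz i
  have h1 := hz i
  have h2 : |x i - y i| ≤ ‖x - y‖ := by
    simpa using PiLp.norm_apply_le (x - y) i
  have h3 := abs_sub_le (z i) (x i) (y i)
  linarith

lemma integrableOn_cube {f : EuclideanSpace ℝ (Fin n) → ℂ} (hf : LocallyIntegrable f volume)
    (x : EuclideanSpace ℝ (Fin n)) {l : ℝ} (hl : 0 < l) : IntegrableOn f (cube x l) volume :=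
  hf.integrableOn_isCompact (isCompact_cube x hl)

lemma integrableOn_norm_sub {f : EuclideanSpace ℝ (Fin n) → ℂ}
    (hf : LocallyIntegrable f volume) (c : ℂ)
    (x : EuclideanSpace ℝ (Fin n)) {l : ℝ} (hl : 0 < l) :
    IntegrableOn (fun z => ‖f z - c‖) (cube x l) volume :=
  ((integrableOn_cube hf x hl).sub
    (integrableOn_const (isCompact_cube x hl).measure_lt_top.ne)).norm

lemma norm_mean_sub_le {f : EuclideanSpace ℝ (Fin n) → ℂ} (hf : LocallyIntegrable f volume)
    (c : ℂ) (x : EuclideanSpace ℝ (Fin n)) {l : ℝ} (hl : 0 < l) :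
    ‖mean f x l - c‖ ≤ ⨍ z in cube x l, ‖f z - c‖ := by
  have h0 : volume.real (cube x l) ≠ 0 := by rw [volume_cube x hl]; positivity
  have h1 : mean f x l - c = ⨍ z in cube x l, (f z - c) := by
    rw [mean, setAverage_eq, setAverage_eq, integral_sub (integrableOn_cube hf x hl)
      (integrableOn_const (isCompact_cube x hl).measure_lt_top.ne), setIntegral_const, smul_sub,
      smul_smul, inv_mul_cancel₀ h0, one_smul]
  rw [h1, setAverage_eq, setAverage_eq, norm_smul, norm_inv, Real.norm_of_nonneg (by positivity),
    smul_eq_mul]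
  gcongr
  exact norm_integral_le_integral_norm _

lemma average_mono {u v : EuclideanSpace ℝ (Fin n) → ℝ} {x : EuclideanSpace ℝ (Fin n)} {l : ℝ}
    (hu : IntegrableOn u (cube x l) volume) (hv : IntegrableOn v (cube x l) volume)
    (h : ∀ z, u z ≤ v z) : ⨍ z in cube x l, u z ≤ ⨍ z in cube x l, v z := by
  rw [setAverage_eq, setAverage_eq, smul_eq_mul, smul_eq_mul]
  exact mul_le_mul_of_nonneg_left (integral_mono hu hv h) (by positivity)

lemma average_const (c : ℝ) (x : EuclideanSpace ℝ (Fin n)) {l : ℝ} (hl : 0 < l) :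
    ⨍ _ in cube x l, c = c := by
  refine setAverage_const ?_ (isCompact_cube x hl).measure_lt_top.ne c
  intro h
  have := volume_cube x hl
  rw [Measure.real, h] at this
  have h0 : l ^ n = 0 := by simpa using this.symm
  exact (pow_pos hl n).ne' h0

/-- Up to a factor `2`, the mean is the best constant in the mean oscillation. -/
lemma meanOsc_le_two_mul {f : EuclideanSpace ℝ (Fin n) → ℂ} (hf : LocallyIntegrable f volume)
    (c : ℂ) (x : EuclideanSpace ℝ (Fin n)) {l : ℝ} (hl : 0 < l) :
    meanOsc f x l ≤ 2 * ⨍ z in cube x l, ‖f z - c‖ := by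
  have hi := integrableOn_norm_sub hf c x hl
  have hc : IntegrableOn (fun _ => ‖mean f x l - c‖) (cube x l) volume :=
    integrableOn_const (isCompact_cube x hl).measure_lt_top.ne
  have h1 : meanOsc f x l ≤ ⨍ z in cube x l, (‖f z - c‖ + ‖mean f x l - c‖) := by
    refine average_mono (integrableOn_norm_sub hf _ x hl) (hi.add hc) fun z => ?_
    have := norm_sub_le (f z - c) (mean f x l - c)
    rwa [sub_sub_sub_cancel_right] at this
  have h2 : ⨍ z in cube x l, (‖f z - c‖ + ‖mean f x l - c‖)
      = (⨍ z in cube x l, ‖f z - c‖) + ‖mean f x l - c‖ := by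
    conv_rhs => rw [← average_const ‖mean f x l - c‖ x hl]
    rw [setAverage_eq, setAverage_eq, setAverage_eq, integral_add hi hc, smul_add]
  have := norm_mean_sub_le hf c x hl
  linarith

/-- Passing to a subcube costs at most the ratio of the volumes. -/
lemma average_subcube_le {f : EuclideanSpace ℝ (Fin n) → ℂ} (hf : LocallyIntegrable f volume)
    (c : ℂ) {x y : EuclideanSpace ℝ (Fin n)} {l l' : ℝ} (hl : 0 < l) (hl' : 0 < l')
    (h : 2 * ‖x - y‖ + l ≤ l') :
    ⨍ z in cube x l, ‖f z - c‖ ≤ (l' / l) ^ n * ⨍ z in cube y l', ‖f z - c‖ := by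
  rw [setAverage_eq, setAverage_eq, smul_eq_mul, smul_eq_mul, volume_cube x hl,
    volume_cube y hl', div_pow, ← mul_assoc]
  have h1 : l' ^ n / l ^ n * (l' ^ n)⁻¹ = (l ^ n)⁻¹ := by field_simp
  rw [h1]
  have := setIntegral_mono_set (integrableOn_norm_sub hf c y hl')
    (Eventually.of_forall fun z => norm_nonneg _) (cube_subset h).eventuallyLE
  gcongr

lemma meanOsc_nonneg (f : EuclideanSpace ℝ (Fin n) → ℂ) (x : EuclideanSpace ℝ (Fin n)) (l : ℝ) :
    0 ≤ meanOsc f x l := by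
  rw [meanOsc, setAverage_eq]
  have : 0 ≤ ∫ z in cube x l, ‖f z - mean f x l‖ := integral_nonneg fun _ => norm_nonneg _
  positivity

lemma norm_mean_sub_mean_le {f : EuclideanSpace ℝ (Fin n) → ℂ}
    (hf : LocallyIntegrable f volume) {x y : EuclideanSpace ℝ (Fin n)} {l l' : ℝ}
    (hl : 0 < l) (hl' : 0 < l') (h : 2 * ‖x - y‖ + l ≤ l') :
    ‖mean f x l - mean f y l'‖ ≤ (l' / l) ^ n * meanOsc f y l' :=
  (norm_mean_sub_le hf _ x hl).trans (average_subcube_le hf _ hl hl' h)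

lemma meanOsc_subcube_le {f : EuclideanSpace ℝ (Fin n) → ℂ}
    (hf : LocallyIntegrable f volume) {x y : EuclideanSpace ℝ (Fin n)} {l l' : ℝ}
    (hl : 0 < l) (hl' : 0 < l') (h : 2 * ‖x - y‖ + l ≤ l') :
    meanOsc f x l ≤ 2 * (l' / l) ^ n * meanOsc f y l' := by
  have h1 := meanOsc_le_two_mul hf (mean f y l') x hl
  have h2 := average_subcube_le hf (mean f y l') hl hl' h
  rw [mul_assoc]
  exact h1.trans (mul_le_mul_of_nonneg_left h2 zero_le_two)

lemma osc_eq (hn : 1 ≤ n) (α : ℝ) (f : EuclideanSpace ℝ (Fin n) → ℂ)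
    (Q : BetaCube n (fun _ => 1)) :
    osc (fun _ => 1) α f Q = Q.l ^ (-α) * meanOsc f Q.c Q.l := by
  have hn' : (n : ℝ) ≠ 0 := by positivity
  have hs : Q.set = cube Q.c Q.l := by
    ext z; simp [BetaCube.set, cube]
  simp only [osc, meanOsc, mean, cubeAvg, hs]
  congr 1
  rw [← Real.rpow_mul Q.l_pos.le]
  congr 1
  simp
  field_simp

lemma osc_le_iff (hn : 1 ≤ n) (α : ℝ) (f : EuclideanSpace ℝ (Fin n) → ℂ)
    (Q : BetaCube n (fun _ => 1)) (C : ℝ) :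
    osc (fun _ => 1) α f Q ≤ C ↔ meanOsc f Q.c Q.l ≤ C * Q.l ^ α := by
  rw [osc_eq hn, Real.rpow_neg Q.l_pos.le, mul_comm, ← div_eq_mul_inv,
    div_le_iff₀ (Real.rpow_pos_of_pos Q.l_pos α)]

/-! ### Campanato estimates at Lebesgue points -/

/-- A point at which the means over all shrinking concentric cubes recover the value of `f`. -/
def IsLebesguePoint (f : EuclideanSpace ℝ (Fin n) → ℂ) (x : EuclideanSpace ℝ (Fin n)) : Prop :=
  ∀ l : ℕ → ℝ, Tendsto l atTop (𝓝[>] 0) → Tendsto (fun k => mean f x (l k)) atTop (𝓝 (f x))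

/-- The Lebesgue differentiation theorem for cubes. Cubes are the balls of the sup norm, so it
follows from the corresponding theorem for balls in `Fin n → ℝ`. -/
lemma ae_isLebesguePoint {f : EuclideanSpace ℝ (Fin n) → ℂ} (hf : LocallyIntegrable f volume) :
    ∀ᵐ x, IsLebesguePoint f x := by
  have hp := PiLp.volume_preserving_toLp (Fin n)
  have hemb : MeasurableEmbedding (WithLp.toLp 2 : (Fin n → ℝ) → EuclideanSpace ℝ (Fin n)) :=
    (MeasurableEquiv.toLp 2 (Fin n → ℝ)).measurableEmbedding
  have hg : LocallyIntegrable (fun z : Fin n → ℝ => f (WithLp.toLp 2 z)) volume := by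
    have := (locallyIntegrable_map_homeomorph (PiLp.homeomorph 2 (fun _ : Fin n => ℝ)).symm
      (f := f) (μ := volume)).1 (by
        change LocallyIntegrable f (Measure.map (WithLp.toLp 2) volume)
        rw [hp.map_eq]; exact hf)
    exact this
  have h := IsUnifLocDoublingMeasure.ae_tendsto_average volume hg 1
  have h' := (PiLp.volume_preserving_ofLp (Fin n)).quasiMeasurePreserving.ae h
  filter_upwards [h'] with x hx l hl
  have h2 := hx (fun _ => WithLp.ofLp x) (fun k => l k / 2) (l := atTop) (by
    rw [tendsto_nhdsWithin_iff] at hl ⊢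
    refine ⟨by simpa using hl.1.div_const 2, ?_⟩
    filter_upwards [hl.2] with k hk
    have : 0 < l k := hk
    exact half_pos this) (by
    rw [tendsto_nhdsWithin_iff] at hl
    filter_upwards [hl.2] with k hk
    have : 0 < l k := hk
    simp
    positivity)
  have h3 := (tendsto_nhdsWithin_iff.1 hl).2
  refine (h2.congr' ?_)
  filter_upwards [h3] with k hk
  have hk : 0 < l k := hk
  rw [mean, setAverage_eq, setAverage_eq, cube_eq_preimage x hk,
    ← hp.setIntegral_preimage_emb hemb, Measure.real, Measure.real,
    (PiLp.volume_preserving_ofLp (Fin n)).measure_preimage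
      measurableSet_closedBall.nullMeasurableSet]
  rfl

/-- Campanato's telescoping estimate: at a Lebesgue point, a power bound on the mean oscillations
over concentric cubes bounds the distance from the value of `f` to its mean, by summing the
differences of the means over successively halved cubes. -/
lemma norm_mean_sub_apply_le {f : EuclideanSpace ℝ (Fin n) → ℂ}
    (hf : LocallyIntegrable f volume) {x : EuclideanSpace ℝ (Fin n)} (hx : IsLebesguePoint f x)
    {a A l : ℝ} (ha : 0 < a) (hl : 0 < l)
    (h : ∀ l', 0 < l' → l' ≤ l → meanOsc f x l' ≤ A * l' ^ a) :
    ‖mean f x l - f x‖ ≤ 2 ^ n * A * l ^ a / (1 - (1 / 2) ^ a) := by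
  have hr : ((1 / 2 : ℝ)) ^ a < 1 := Real.rpow_lt_one (by norm_num) (by norm_num) ha
  have hpos : ∀ k : ℕ, 0 < l * (1 / 2) ^ k := fun k => by positivity
  have ht : Tendsto (fun k : ℕ => l * (1 / 2 : ℝ) ^ k) atTop (𝓝[>] 0) := by
    rw [tendsto_nhdsWithin_iff]
    refine ⟨?_, Eventually.of_forall hpos⟩
    simpa using (tendsto_pow_atTop_nhds_zero_of_lt_one (r := (1 / 2 : ℝ))
      (by norm_num) (by norm_num)).const_mul l
  have key := dist_le_of_le_geometric_of_tendsto₀ ((1 / 2 : ℝ) ^ a) (2 ^ n * A * l ^ a)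
    (f := fun k : ℕ => mean f x (l * (1 / 2) ^ k)) hr (fun k => ?_) (hx _ ht)
  · simpa [dist_eq_norm] using key
  · rw [dist_comm, dist_eq_norm]
    have h1 := norm_mean_sub_mean_le hf (x := x) (y := x) (hpos (k + 1)) (hpos k) (by
      have := hpos k
      simp only [sub_self, norm_zero, pow_succ]
      nlinarith)
    have h2 : l * (1 / 2) ^ k / (l * (1 / 2) ^ (k + 1)) = 2 := by
      rw [pow_succ]; field_simp
    rw [h2] at h1
    have h3 := h _ (hpos k) (mul_le_of_le_one_right hl.le (pow_le_one₀ (by norm_num) (by norm_num)))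
    rw [Real.mul_rpow hl.le (by positivity), ← Real.rpow_pow_comm (by norm_num)] at h3
    calc _ ≤ _ := h1
      _ ≤ 2 ^ n * (A * (l ^ a * ((1 / 2) ^ a) ^ k)) := by gcongr
      _ = _ := by ring

/-- The two-point form of Campanato's estimate. -/
lemma exists_norm_sub_le (n : ℕ) {a : ℝ} (ha : 0 < a) :
    ∃ C : ℝ, 0 < C ∧ ∀ f : EuclideanSpace ℝ (Fin n) → ℂ, LocallyIntegrable f volume →
      ∀ x y : EuclideanSpace ℝ (Fin n), IsLebesguePoint f x → IsLebesguePoint f y → ∀ A : ℝ,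
      (∀ l', 0 < l' → l' ≤ 4 * ‖x - y‖ → meanOsc f x l' ≤ A * l' ^ a) →
      (∀ l', 0 < l' → l' ≤ 4 * ‖x - y‖ → meanOsc f y l' ≤ A * l' ^ a) →
      ‖f x - f y‖ ≤ C * A * ‖x - y‖ ^ a := by
  have hr : ((1 / 2 : ℝ)) ^ a < 1 := Real.rpow_lt_one (by norm_num) (by norm_num) ha
  have hr' : 0 < 1 - ((1 / 2 : ℝ)) ^ a := by linarith
  refine ⟨2 ^ n * 4 ^ a / (1 - (1 / 2) ^ a) + 4 ^ n * 4 ^ a + 2 ^ n / (1 - (1 / 2) ^ a),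
    by positivity, fun f hf x y hx hy A hAx hAy => ?_⟩
  rcases eq_or_ne x y with rfl | hxy
  · simp [Real.zero_rpow ha.ne']
  have hd : 0 < ‖x - y‖ := norm_pos_iff.2 (sub_ne_zero.2 hxy)
  set d := ‖x - y‖ with hd_def
  have h1 := norm_mean_sub_apply_le hf hx ha (by positivity : 0 < 4 * d) hAx
  have h2 := norm_mean_sub_apply_le hf hy ha hd
    (fun l' h0 hl' => hAy l' h0 (hl'.trans (by linarith)))
  have h3 := norm_mean_sub_mean_le hf (x := y) (y := x) (l := d) (l' := 4 * d) hd (by positivity)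
    (by rw [norm_sub_rev, ← hd_def]; linarith)
  have h4 : 4 * d / d = 4 := by field_simp
  rw [h4] at h3
  have h5 : 4 ^ n * meanOsc f x (4 * d) ≤ 4 ^ n * (A * (4 * d) ^ a) := by
    gcongr
    exact hAx _ (by positivity) le_rfl
  rw [Real.mul_rpow (by norm_num) hd.le] at h1 h5
  have h6 : ‖f x - f y‖ ≤ ‖mean f x (4 * d) - f x‖ + ‖mean f y d - mean f x (4 * d)‖
      + ‖mean f y d - f y‖ := by
    have e : f x - f y = -(mean f x (4 * d) - f x) - (mean f y d - mean f x (4 * d))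
      + (mean f y d - f y) := by ring
    rw [e]
    refine (norm_add_le _ _).trans ?_
    gcongr
    refine (norm_sub_le _ _).trans ?_
    rw [norm_neg]
  calc _ ≤ _ := h6
    _ ≤ 2 ^ n * A * (4 ^ a * d ^ a) / (1 - (1 / 2) ^ a) + 4 ^ n * (A * (4 ^ a * d ^ a))
      + 2 ^ n * A * d ^ a / (1 - (1 / 2) ^ a) := by
        gcongr
        exact h3.trans h5
    _ = _ := by ring

/-! ### Pointwise consequences of the vanishing conditions -/

/-- Small-scale modulus: vanishing of the oscillation at small scales gives a little-Hölder
estimate between Lebesgue points. -/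
lemma small_scale {α : ℝ} (hα0 : 0 < α) {f : EuclideanSpace ℝ (Fin n) → ℂ}
    (hf : LocallyIntegrable f volume)
    (hi : ∀ ε > (0:ℝ), ∃ r > (0:ℝ), ∀ x l, 0 < l → l ≤ r → meanOsc f x l ≤ ε * l ^ α)
    {ε : ℝ} (hε : 0 < ε) :
    ∃ r > (0:ℝ), ∀ x y, IsLebesguePoint f x → IsLebesguePoint f y → ‖x - y‖ ≤ r →
      ‖f x - f y‖ ≤ ε * ‖x - y‖ ^ α := by
  obtain ⟨C, hC, h⟩ := exists_norm_sub_le n hα0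
  obtain ⟨r, hr, hr'⟩ := hi (ε / C) (by positivity)
  refine ⟨r / 4, by positivity, fun x y hx hy hxy => ?_⟩
  have := h f hf x y hx hy (ε / C) (fun l' h0 hl => hr' x l' h0 (by linarith))
    (fun l' h0 hl => hr' y l' h0 (by linarith))
  rwa [mul_div_cancel₀ _ hC.ne'] at this

/-- Large-scale modulus. The scales below the threshold `R` of condition (ii) only satisfy the
bound with the constant `M`; running the telescoping estimate with the exponent `α / 2` turns
their contribution into `M * R ^ (α / 2) * ‖x - y‖ ^ (α / 2)`, which is of lower order. -/
lemma large_scale {α : ℝ} (hα0 : 0 < α) (hα1 : α < 1) {f : EuclideanSpace ℝ (Fin n) → ℂ}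
    (hf : LocallyIntegrable f volume) {M : ℝ} (hM0 : 0 ≤ M)
    (hM : ∀ x l, 0 < l → meanOsc f x l ≤ M * l ^ α)
    (hii : ∀ ε > (0:ℝ), ∃ r > (0:ℝ), ∀ x l, r ≤ l → meanOsc f x l ≤ ε * l ^ α)
    {ε : ℝ} (hε : 0 < ε) :
    ∃ D > (0:ℝ), ∀ x y, IsLebesguePoint f x → IsLebesguePoint f y → D ≤ ‖x - y‖ →
      ‖f x - f y‖ ≤ ε * ‖x - y‖ ^ α := by
  obtain ⟨C, hC, h⟩ := exists_norm_sub_le n (half_pos hα0)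
  obtain ⟨R, hR, hR'⟩ := hii (ε / (3 * C)) (by positivity)
  have hev := (tendsto_rpow_atTop (half_pos hα0)).eventually_ge_atTop
    (M * R ^ (α / 2) / (ε / (3 * C)))
  obtain ⟨D, hD⟩ := eventually_atTop.1 hev
  refine ⟨max D 1, by positivity, fun x y hx hy hxy => ?_⟩
  have hd : 0 < ‖x - y‖ := lt_of_lt_of_le (by positivity) hxy
  have hD' := hD _ ((le_max_left _ _).trans hxy)
  set d := ‖x - y‖ with hd_def
  rw [div_le_iff₀ (by positivity)] at hD'
  set δ := ε / (3 * C) with hδ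
  have hδ0 : 0 < δ := by positivity
  have hsplit : ∀ t : ℝ, 0 < t → t ^ α = t ^ (α / 2) * t ^ (α / 2) := fun t ht => by
    rw [← Real.rpow_add ht, add_halves]
  have hbound : ∀ w, ∀ l', 0 < l' → l' ≤ 4 * d →
      meanOsc f w l' ≤ (δ * (4 * d) ^ (α / 2) + M * R ^ (α / 2)) * l' ^ (α / 2) := by
    intro w l' h0 hl'
    rcases le_total R l' with hRl | hRl
    · calc _ ≤ δ * l' ^ α := hR' w l' hRl
        _ = (δ * l' ^ (α / 2) + 0) * l' ^ (α / 2) := by rw [hsplit l' h0]; ring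
        _ ≤ _ := by gcongr; positivity
    · calc _ ≤ M * l' ^ α := hM w l' h0
        _ = (0 + M * l' ^ (α / 2)) * l' ^ (α / 2) := by rw [hsplit l' h0]; ring
        _ ≤ _ := by gcongr; positivity
  have h1 := h f hf x y hx hy _ (hbound x) (hbound y)
  have h4 : (4 : ℝ) ^ (α / 2) ≤ 2 := by
    calc (4 : ℝ) ^ (α / 2) ≤ 4 ^ (1 / 2 : ℝ) := by
          apply Real.rpow_le_rpow_of_exponent_le <;> linarith
      _ = 2 := by
        rw [← Real.sqrt_eq_rpow, show (4 : ℝ) = 2 ^ 2 by norm_num]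
        exact Real.sqrt_sq (by norm_num)
  calc ‖f x - f y‖ ≤ _ := h1
    _ ≤ C * (δ * (2 * d ^ (α / 2)) + d ^ (α / 2) * δ) * d ^ (α / 2) := by
        rw [Real.mul_rpow (by norm_num) hd.le]
        gcongr
    _ = 3 * C * δ * (d ^ (α / 2) * d ^ (α / 2)) := by ring
    _ = ε * d ^ α := by
        rw [← hsplit d hd, hδ]
        field_simp

/-- Far from the origin the little-Hölder estimate holds at every scale. -/
lemma far_away {α : ℝ} (hα0 : 0 < α) (hα1 : α < 1) {f : EuclideanSpace ℝ (Fin n) → ℂ}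
    (hf : LocallyIntegrable f volume) {M : ℝ} (hM0 : 0 ≤ M)
    (hM : ∀ x l, 0 < l → meanOsc f x l ≤ M * l ^ α)
    (hi : ∀ ε > (0:ℝ), ∃ r > (0:ℝ), ∀ x l, 0 < l → l ≤ r → meanOsc f x l ≤ ε * l ^ α)
    (hii : ∀ ε > (0:ℝ), ∃ r > (0:ℝ), ∀ x l, r ≤ l → meanOsc f x l ≤ ε * l ^ α)
    (hiii : ∀ l > (0:ℝ), ∀ ε > (0:ℝ), ∃ R : ℝ, ∀ x, R ≤ ‖x‖ → meanOsc f x l ≤ ε * l ^ α)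
    {ε : ℝ} (hε : 0 < ε) :
    ∃ N > (0:ℝ), ∀ x y, IsLebesguePoint f x → IsLebesguePoint f y → N ≤ ‖x‖ →
      ‖f x - f y‖ ≤ ε * ‖x - y‖ ^ α := by
  obtain ⟨D, hD, hlarge⟩ := large_scale hα0 hα1 hf hM0 hM hii hε
  obtain ⟨C, hC, h⟩ := exists_norm_sub_le n hα0
  set δ := ε / C with hδ
  have hδ0 : 0 < δ := by positivity
  obtain ⟨r, hr, hsmall⟩ := hi δ hδ0
  -- `η` absorbs the cost of passing from `cube w (4 * D)` to a concentric cube of side `≥ r`.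
  set η := δ * r ^ α / (2 * (4 * D / r) ^ n * (4 * D) ^ α) with hη
  have hη0 : 0 < η := by positivity
  obtain ⟨R, hR⟩ := hiii (4 * D) (by positivity) η hη0
  refine ⟨max R 0 + D, by positivity, fun x y hx hy hN => ?_⟩
  rcases le_total D ‖x - y‖ with hd | hd
  · exact hlarge x y hx hy hd
  have hmid : ∀ w, R ≤ ‖w‖ → ∀ l', 0 < l' → l' ≤ 4 * ‖x - y‖ → meanOsc f w l' ≤ δ * l' ^ α := by
    intro w hw l' h0 hl'
    rcases le_total l' r with hlr | hlr
    · exact hsmall w l' h0 hlr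
    have h1 := meanOsc_subcube_le hf (x := w) (y := w) h0 (by positivity : 0 < 4 * D)
      (by simp; linarith)
    calc _ ≤ _ := h1
      _ ≤ 2 * (4 * D / r) ^ n * (η * (4 * D) ^ α) := by
          gcongr
          · exact meanOsc_nonneg f w _
          · exact hR w hw
      _ = δ * r ^ α := by rw [hη]; field_simp
      _ ≤ _ := by gcongr
  have hxR : R ≤ ‖x‖ := by linarith [le_max_left R 0]
  have hyR : R ≤ ‖y‖ := by
    have := norm_sub_norm_le x y
    linarith [le_max_left R 0]
  have := h f hf x y hx hy δ (hmid x hxR) (hmid y hyR)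
  rwa [hδ, mul_div_cancel₀ _ hC.ne'] at this

/-! ### Mollification and truncation -/

/-- Mollification at scale `t`. The estimates only see the values of `f` on a set `P` of full
measure: differences of the mollification, and its distance to `f`, are averages over `‖z‖ < t`
of the corresponding differences for the translates of `f`. -/
lemma exists_mollification {f : EuclideanSpace ℝ (Fin n) → ℂ} (hf : LocallyIntegrable f volume)
    {P : EuclideanSpace ℝ (Fin n) → Prop} (hP : ∀ᵐ x, P x) {t : ℝ} (ht : 0 < t) :
    ∃ u : EuclideanSpace ℝ (Fin n) → ℂ, ContDiff ℝ (⊤ : ℕ∞) u ∧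
      (∀ x y B, (∀ z, ‖z‖ < t → P (x - z) → P (y - z) → ‖f (x - z) - f (y - z)‖ ≤ B) →
        ‖u x - u y‖ ≤ B) ∧
      (∀ x B, (∀ z, ‖z‖ < t → P (x - z) → ‖f x - f (x - z)‖ ≤ B) → ‖f x - u x‖ ≤ B) := by
  let b : ContDiffBump (0 : EuclideanSpace ℝ (Fin n)) := ⟨t / 2, t, by positivity, by linarith⟩
  let φ : EuclideanSpace ℝ (Fin n) → ℝ := b.normed volume
  have hφc : HasCompactSupport φ := b.hasCompactSupport_normed
  have hφd : ContDiff ℝ (⊤ : ℕ∞) φ := b.contDiff_normed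
  have hφi : Integrable φ volume := b.integrable_normed
  have hφ1 : ∫ z, φ z = 1 := b.integral_normed
  have hex : ∀ x, Integrable (fun z => φ z • f (x - z)) volume := fun x => by
    simpa [ConvolutionExistsAt] using hφc.convolutionExists_left
      (ContinuousLinearMap.lsmul ℝ ℝ : ℝ →L[ℝ] ℂ →L[ℝ] ℂ) hφd.continuous hf x
  have hP' : ∀ x, ∀ᵐ z, P (x - z) := fun x =>
    (quasiMeasurePreserving_sub_left volume x).ae hP
  -- averages against `φ` only see the ball of radius `t`
  have havg : ∀ (v : EuclideanSpace ℝ (Fin n) → ℂ) (B : ℝ),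
      (∀ᵐ z, ‖z‖ < t → ‖v z‖ ≤ B) → ‖∫ z, φ z • v z‖ ≤ B := by
    intro v B hv
    have h1 := norm_integral_le_of_norm_le (f := fun z => φ z • v z) (g := fun z => φ z * B)
      (hφi.mul_const B) (by
        filter_upwards [hv] with z hz
        rw [norm_smul, Real.norm_of_nonneg (b.nonneg_normed z)]
        by_cases hzt : ‖z‖ < t
        · exact mul_le_mul_of_nonneg_left (hz hzt) (b.nonneg_normed z)
        · have h0 : φ z = 0 := by
            have : z ∉ Function.support φ := by
              change z ∉ Function.support (b.normed volume)
              rw [b.support_normed_eq]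
              simpa using hzt
            simpa using this
          change φ z * ‖v z‖ ≤ φ z * B
          simp [h0])
    rwa [integral_mul_const, hφ1, one_mul] at h1
  refine ⟨convolution φ f (ContinuousLinearMap.lsmul ℝ ℝ : ℝ →L[ℝ] ℂ →L[ℝ] ℂ) volume,
    hφc.contDiff_convolution_left _ hφd hf, fun x y B h => ?_, fun x B h => ?_⟩
  · have e : (convolution φ f (ContinuousLinearMap.lsmul ℝ ℝ : ℝ →L[ℝ] ℂ →L[ℝ] ℂ) volume) x
        - (convolution φ f (ContinuousLinearMap.lsmul ℝ ℝ : ℝ →L[ℝ] ℂ →L[ℝ] ℂ) volume) y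
        = ∫ z, φ z • (f (x - z) - f (y - z)) := by
      simp only [convolution_def, ContinuousLinearMap.lsmul_apply, smul_sub]
      rw [integral_sub (hex x) (hex y)]
    rw [e]
    apply havg
    filter_upwards [hP' x, hP' y] with z h1 h2 h3 using h z h3 h1 h2
  · have e : f x
        - (convolution φ f (ContinuousLinearMap.lsmul ℝ ℝ : ℝ →L[ℝ] ℂ →L[ℝ] ℂ) volume) x
        = ∫ z, φ z • (f x - f (x - z)) := by
      simp only [convolution_def, ContinuousLinearMap.lsmul_apply, smul_sub]
      rw [integral_sub (hφi.smul_const _) (hex x), integral_smul_const, hφ1, one_smul]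
    rw [e]
    apply havg
    filter_upwards [hP' x] with z h1 h3 using h z h3 h1

/-- A smooth cutoff adapted to balls of radius `N` and `2 * N`, whose Lipschitz constant scales
like `1 / N`; boundedness and the Lipschitz bound are combined into one Hölder bound. -/
lemma exists_cutoff (n : ℕ) {α : ℝ} (hα0 : 0 < α) (hα1 : α < 1) :
    ∃ L : ℝ, 0 < L ∧ ∀ N : ℝ, 0 < N → ∃ χ : EuclideanSpace ℝ (Fin n) → ℝ,
      ContDiff ℝ (⊤ : ℕ∞) χ ∧ HasCompactSupport χ ∧ (∀ x, 0 ≤ χ x ∧ χ x ≤ 1) ∧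
      (∀ x, ‖x‖ ≤ N → χ x = 1) ∧ (∀ x, 2 * N ≤ ‖x‖ → χ x = 0) ∧
      ∀ x y, N ^ α * |χ x - χ y| ≤ L * ‖x - y‖ ^ α := by
  let b : ContDiffBump (0 : EuclideanSpace ℝ (Fin n)) := ⟨1, 2, by norm_num, by norm_num⟩
  have hbd : ContDiff ℝ (⊤ : ℕ∞) b := b.contDiff
  obtain ⟨K, hK⟩ := hbd.lipschitzWith_of_hasCompactSupport b.hasCompactSupport (by simp)
  have hK' : ∀ x y, |b x - b y| ≤ (K + 1) * ‖x - y‖ := fun x y => by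
    have := hK.dist_le_mul x y
    rw [Real.dist_eq, dist_eq_norm] at this
    nlinarith [norm_nonneg (x - y)]
  refine ⟨(K + 1), by positivity, fun N hN => ⟨fun x => b (N⁻¹ • x), ?_, ?_, ?_, ?_, ?_, ?_⟩⟩
  · exact hbd.comp (contDiff_const_smul _)
  · exact b.hasCompactSupport.comp_smul (inv_ne_zero hN.ne')
  · exact fun x => ⟨b.nonneg, b.le_one⟩
  · intro x hx
    apply b.one_of_mem_closedBall
    simp only [mem_closedBall, dist_zero_right, norm_smul, norm_inv, Real.norm_of_nonneg hN.le]
    rw [inv_mul_le_iff₀ hN]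
    simpa [b] using hx
  · intro x hx
    apply b.zero_of_le_dist
    simp only [dist_zero_right, norm_smul, norm_inv, Real.norm_of_nonneg hN.le]
    rw [le_inv_mul_iff₀ hN]
    simp only [b]
    linarith
  · intro x y
    set s := |b (N⁻¹ • x) - b (N⁻¹ • y)| with hs
    have hs0 : 0 ≤ s := abs_nonneg _
    have hs1 : s ≤ 1 := by
      rw [hs, abs_le]
      have h1 := b.nonneg (x := N⁻¹ • x)
      have h2 := b.nonneg (x := N⁻¹ • y)
      have h3 := b.le_one (x := N⁻¹ • x)
      have h4 := b.le_one (x := N⁻¹ • y)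
      constructor <;> linarith
    have hs2 : s ≤ (K + 1) * (N⁻¹ * ‖x - y‖) := by
      have := hK' (N⁻¹ • x) (N⁻¹ • y)
      rwa [← smul_sub, norm_smul, norm_inv, Real.norm_of_nonneg hN.le] at this
    have hNs : N * s ≤ (K + 1) * ‖x - y‖ := by
      calc N * s ≤ N * ((K + 1) * (N⁻¹ * ‖x - y‖)) := by gcongr
        _ = _ := by field_simp
    have hK1 : (1 : ℝ) ≤ K + 1 := by simp
    calc N ^ α * s ≤ N ^ α * s ^ α := by
          gcongr
          exact Real.self_le_rpow_of_le_one hs0 hs1 hα1.le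
      _ = (N * s) ^ α := (Real.mul_rpow hN.le hs0).symm
      _ ≤ ((K + 1) * ‖x - y‖) ^ α := by gcongr
      _ = (K + 1) ^ α * ‖x - y‖ ^ α := Real.mul_rpow (by positivity) (norm_nonneg _)
      _ ≤ (K + 1) * ‖x - y‖ ^ α := by
          gcongr
          exact Real.rpow_le_self_of_one_le hK1 hα1.le

/-- Truncation: a continuous function satisfying the Hölder estimate with constant `ε` near
infinity agrees, up to a constant and a function with Hölder seminorm `≲ ε`, with a cut-off of
itself. -/
lemma truncation {α L : ℝ} (hα0 : 0 < α) (hα1 : α < 1) (hL : 0 < L)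
    (hcut : ∀ N : ℝ, 0 < N → ∃ χ : EuclideanSpace ℝ (Fin n) → ℝ,
      ContDiff ℝ (⊤ : ℕ∞) χ ∧ HasCompactSupport χ ∧ (∀ x, 0 ≤ χ x ∧ χ x ≤ 1) ∧
      (∀ x, ‖x‖ ≤ N → χ x = 1) ∧ (∀ x, 2 * N ≤ ‖x‖ → χ x = 0) ∧
      ∀ x y, N ^ α * |χ x - χ y| ≤ L * ‖x - y‖ ^ α)
    {u : EuclideanSpace ℝ (Fin n) → ℂ} (hu : ContDiff ℝ (⊤ : ℕ∞) u)
    {ε N : ℝ} (hε : 0 < ε) (hN : 0 < N)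
    (hfar : ∀ x y, N ≤ ‖x‖ → ‖u x - u y‖ ≤ ε * ‖x - y‖ ^ α) :
    ∃ g : EuclideanSpace ℝ (Fin n) → ℂ, ContDiff ℝ (⊤ : ℕ∞) g ∧ HasCompactSupport g ∧
      ∀ x y, ‖(u x - g x) - (u y - g y)‖ ≤ (1 + 2 * L) * ε * ‖x - y‖ ^ α := by
  obtain ⟨K, hK⟩ :=
    (isCompact_closedBall (0 : EuclideanSpace ℝ (Fin n)) N).exists_bound_of_continuousOn
    (f := fun x => u x - u 0) (hu.continuous.sub continuous_const).continuousOn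
  obtain ⟨N', hN', hKN'⟩ := ((eventually_ge_atTop N).and
    ((tendsto_rpow_atTop hα0).eventually_ge_atTop (K / ε))).exists
  rw [div_le_iff₀ hε] at hKN'
  have hN'0 : 0 < N' := hN.trans_le hN'
  obtain ⟨χ, hχd, hχc, hχ01, hχ1, hχ0, hχL⟩ := hcut N' hN'0
  have htwo : (2 : ℝ) ^ α ≤ 2 := Real.rpow_le_self_of_one_le (by norm_num) hα1.le
  have htwo' : (1 : ℝ) ≤ 2 ^ α := Real.one_le_rpow (by norm_num) hα0.le
  -- size of `u - u 0` where the cutoff is not constant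
  have hsize : ∀ y, ‖y‖ ≤ 2 * N' → ‖u y - u 0‖ ≤ 2 * ε * N' ^ α := by
    intro y hy
    rcases le_total N ‖y‖ with h | h
    · calc _ ≤ ε * ‖y - 0‖ ^ α := hfar y 0 h
        _ ≤ ε * (2 * N') ^ α := by rw [sub_zero]; gcongr
        _ = ε * (2 ^ α * N' ^ α) := by rw [Real.mul_rpow (by norm_num) hN'0.le]
        _ ≤ ε * (2 * N' ^ α) := by gcongr
        _ = _ := by ring
    · have := hK y (by simpa using h)
      have h0 : 0 ≤ N' ^ α := by positivity
      nlinarith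
  have main : ∀ x y, ‖y‖ ≤ ‖x‖ →
      ‖(u x - χ x • (u x - u 0)) - (u y - χ y • (u y - u 0))‖
        ≤ (1 + 2 * L) * ε * ‖x - y‖ ^ α := by
    intro x y hyx
    have hd0 : 0 ≤ ‖x - y‖ ^ α := by positivity
    rcases le_total ‖x‖ N' with hx | hx
    · rw [hχ1 x hx, hχ1 y (hyx.trans hx)]
      simp
      positivity
    have e : (u x - χ x • (u x - u 0)) - (u y - χ y • (u y - u 0))
        = (1 - χ x) • (u x - u y) - (χ x - χ y) • (u y - u 0) := by
      simp only [Complex.real_smul]; push_cast; ring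
    have h1 : ‖(1 - χ x) • (u x - u y)‖ ≤ ε * ‖x - y‖ ^ α := by
      rw [norm_smul, Real.norm_of_nonneg (by linarith [(hχ01 x).2])]
      calc _ ≤ 1 * ‖u x - u y‖ := by gcongr; linarith [(hχ01 x).1]
        _ = ‖u x - u y‖ := one_mul _
        _ ≤ _ := hfar x y (hN'.trans hx)
    have h2 : ‖(χ x - χ y) • (u y - u 0)‖ ≤ 2 * L * ε * ‖x - y‖ ^ α := by
      rcases le_total (2 * N') ‖y‖ with hy | hy
      · rw [hχ0 x (hy.trans hyx), hχ0 y hy]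
        simp
        positivity
      · rw [norm_smul, Real.norm_eq_abs]
        calc _ ≤ |χ x - χ y| * (2 * ε * N' ^ α) := by gcongr; exact hsize y hy
          _ = 2 * ε * (N' ^ α * |χ x - χ y|) := by ring
          _ ≤ 2 * ε * (L * ‖x - y‖ ^ α) :=
              mul_le_mul_of_nonneg_left (hχL x y) (by positivity)
          _ = _ := by ring
    rw [e]
    refine (norm_sub_le _ _).trans ((add_le_add h1 h2).trans (le_of_eq (by ring)))
  refine ⟨fun x => χ x • (u x - u 0), hχd.smul (hu.sub contDiff_const), hχc.smul_right,
    fun x y => ?_⟩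
  rcases le_total ‖y‖ ‖x‖ with h | h
  · exact main x y h
  · rw [norm_sub_rev, norm_sub_rev x y]
    exact main y x h

/-! ### From pointwise bounds to oscillations, and assembly -/

lemma norm_sub_le_of_mem_cube {x c y : EuclideanSpace ℝ (Fin n)} {l : ℝ}
    (hx : x ∈ cube c l) (hy : y ∈ cube c l) : ‖x - y‖ ≤ n * l := by
  have h1 : ‖x - y‖ ≤ ∑ i, |x i - y i| := by
    rw [EuclideanSpace.norm_eq]
    refine Real.sqrt_le_iff.2 ⟨Finset.sum_nonneg fun i _ => abs_nonneg _, ?_⟩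
    simpa using Finset.sum_sq_le_sq_sum_of_nonneg (s := Finset.univ)
      (f := fun i => |x i - y i|) fun i _ => abs_nonneg _
  calc _ ≤ ∑ i, |x i - y i| := h1
    _ ≤ ∑ _i : Fin n, l := by
        refine Finset.sum_le_sum fun i _ => ?_
        have h2 := hx i
        have h3 := hy i
        rw [abs_sub_comm] at h3
        have := abs_sub_le (x i) (c i) (y i)
        linarith
    _ = _ := by simp

/-- A function whose values at almost all points of a cube differ by at most `B` has mean
oscillation at most `2 * B` there. -/
lemma meanOsc_le_of_ae {F : EuclideanSpace ℝ (Fin n) → ℂ} (hF : LocallyIntegrable F volume)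
    {P : EuclideanSpace ℝ (Fin n) → Prop} (hP : ∀ᵐ x, P x) {c : EuclideanSpace ℝ (Fin n)}
    {l B : ℝ} (hl : 0 < l) (h : ∀ x ∈ cube c l, ∀ y ∈ cube c l, P x → P y → ‖F x - F y‖ ≤ B) :
    meanOsc F c l ≤ 2 * B := by
  have hv : 0 < volume.real (cube c l) := by rw [volume_cube c hl]; positivity
  have hlt := (isCompact_cube c hl).measure_lt_top (μ := volume)
  have hpos : volume (cube c l) ≠ 0 := fun h0 => by simp [Measure.real, h0] at hv
  have hex : ∃ x ∈ cube c l, P x := by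
    by_contra! hcon
    apply hpos
    exact measure_mono_null (fun x hx => hcon x hx) (ae_iff.1 hP)
  obtain ⟨y, hy, hPy⟩ := hex
  refine (meanOsc_le_two_mul hF (F y) c hl).trans ?_
  gcongr
  rw [setAverage_eq, smul_eq_mul, inv_mul_le_iff₀ hv, mul_comm]
  refine (le_abs_self _).trans ?_
  rw [← Real.norm_eq_abs]
  refine norm_setIntegral_le_of_norm_le_const_ae hlt ?_
  filter_upwards [ae_restrict_of_ae hP, ae_restrict_mem (measurableSet_cube c hl)] with x hx hxc
  rw [norm_norm]
  exact h x hxc y hy hx hPy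

/-- The forward direction: mollify at the scale below which `f` has little-Hölder constant `δ`,
then truncate. -/
lemma exists_approx (hn : 1 ≤ n) {α : ℝ} (hα0 : 0 < α) (hα1 : α < 1)
    {f : EuclideanSpace ℝ (Fin n) → ℂ}
    (hf : LocallyIntegrable f volume) {M : ℝ} (hM0 : 0 ≤ M)
    (hM : ∀ x l, 0 < l → meanOsc f x l ≤ M * l ^ α)
    (hi : ∀ ε > (0:ℝ), ∃ r > (0:ℝ), ∀ x l, 0 < l → l ≤ r → meanOsc f x l ≤ ε * l ^ α)
    (hii : ∀ ε > (0:ℝ), ∃ r > (0:ℝ), ∀ x l, r ≤ l → meanOsc f x l ≤ ε * l ^ α)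
    (hiii : ∀ l > (0:ℝ), ∀ ε > (0:ℝ), ∃ R : ℝ, ∀ x, R ≤ ‖x‖ → meanOsc f x l ≤ ε * l ^ α)
    {ε : ℝ} (hε : 0 < ε) :
    ∃ g : EuclideanSpace ℝ (Fin n) → ℂ, ContDiff ℝ (⊤ : ℕ∞) g ∧ HasCompactSupport g ∧
      ∀ x l, 0 < l → meanOsc (f - g) x l ≤ ε * l ^ α := by
  have hnpos : (0 : ℝ) < n := by positivity
  obtain ⟨L, hL, hcut⟩ := exists_cutoff n hα0 hα1
  set δ := ε / (2 * (3 + 2 * L) * (n : ℝ) ^ α) with hδ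
  have hδ0 : 0 < δ := by positivity
  obtain ⟨r, hr, hsmall⟩ := small_scale hα0 hf hi hδ0
  obtain ⟨N, hN, hfar⟩ := far_away hα0 hα1 hf hM0 hM hi hii hiii hδ0
  obtain ⟨u, hu, hu1, hu2⟩ := exists_mollification hf (ae_isLebesguePoint hf) hr
  have hufar : ∀ x y, N + r ≤ ‖x‖ → ‖u x - u y‖ ≤ δ * ‖x - y‖ ^ α := by
    intro x y hx
    refine hu1 x y _ fun z hz h1 h2 => ?_
    have h3 := norm_sub_norm_le x z
    have := hfar _ _ h1 h2 (by linarith)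
    rwa [sub_sub_sub_cancel_right] at this
  obtain ⟨g, hg, hgc, hgL⟩ := truncation hα0 hα1 hL hcut hu hδ0 (by positivity) hufar
  refine ⟨g, hg, hgc, fun c l hl => ?_⟩
  have hmoll : ∀ x y, IsLebesguePoint f x → IsLebesguePoint f y →
      ‖(f x - u x) - (f y - u y)‖ ≤ 2 * δ * ‖x - y‖ ^ α := by
    intro x y hx hy
    rcases le_total ‖x - y‖ r with hd | hd
    · have h1 := hsmall x y hx hy hd
      have h2 : ‖u x - u y‖ ≤ δ * ‖x - y‖ ^ α := by
        refine hu1 x y _ fun z hz h1 h2 => ?_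
        have := hsmall _ _ h1 h2 (by rwa [sub_sub_sub_cancel_right])
        rwa [sub_sub_sub_cancel_right] at this
      have e : (f x - u x) - (f y - u y) = (f x - f y) - (u x - u y) := by ring
      rw [e]
      refine (norm_sub_le _ _).trans ((add_le_add h1 h2).trans (le_of_eq (by ring)))
    · -- at distances above the mollification scale, use that `f - u` is uniformly small
      have huni : ∀ w, IsLebesguePoint f w → ‖f w - u w‖ ≤ δ * ‖x - y‖ ^ α := by
        intro w hw
        refine hu2 w _ fun z hz h1 => ?_
        have h2 := hsmall w (w - z) hw h1 (by rw [sub_sub_cancel]; exact hz.le)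
        rw [sub_sub_cancel] at h2
        refine h2.trans ?_
        gcongr
        exact hz.le.trans hd
      refine (norm_sub_le _ _).trans
        ((add_le_add (huni x hx) (huni y hy)).trans (le_of_eq (by ring)))
  have hFL : LocallyIntegrable (f - g) volume := hf.sub hg.continuous.locallyIntegrable
  have hfin := meanOsc_le_of_ae hFL (ae_isLebesguePoint hf) (c := c) (l := l)
    (B := (3 + 2 * L) * δ * (n * l) ^ α) hl fun x hx y hy hPx hPy => by
      have e : (f - g) x - (f - g) y
          = ((f x - u x) - (f y - u y)) + ((u x - g x) - (u y - g y)) := by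
        simp only [Pi.sub_apply]; ring
      rw [e]
      calc _ ≤ _ := norm_add_le _ _
        _ ≤ 2 * δ * ‖x - y‖ ^ α + (1 + 2 * L) * δ * ‖x - y‖ ^ α :=
          add_le_add (hmoll x y hPx hPy) (hgL x y)
        _ = (3 + 2 * L) * δ * ‖x - y‖ ^ α := by ring
        _ ≤ _ := by
          gcongr
          exact norm_sub_le_of_mem_cube hx hy
  refine hfin.trans (le_of_eq ?_)
  rw [Real.mul_rpow hnpos.le hl.le, hδ]
  have : (0 : ℝ) < (n : ℝ) ^ α := by positivity
  field_simp

/-- Quasi-subadditivity of the mean oscillation; the factor `2` is harmless here. -/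
lemma meanOsc_le_add {f g : EuclideanSpace ℝ (Fin n) → ℂ} (hf : LocallyIntegrable f volume)
    (hg : LocallyIntegrable g volume) (x : EuclideanSpace ℝ (Fin n)) {l : ℝ} (hl : 0 < l) :
    meanOsc f x l ≤ 2 * (meanOsc (f - g) x l + meanOsc g x l) := by
  have h1 := integrableOn_norm_sub (hf.sub hg) (mean (f - g) x l) x hl
  have h2 := integrableOn_norm_sub hg (mean g x l) x hl
  refine (meanOsc_le_two_mul hf (mean (f - g) x l + mean g x l) x hl).trans ?_
  have h3 : meanOsc (f - g) x l + meanOsc g x l = ⨍ z in cube x l,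
      (‖(f - g) z - mean (f - g) x l‖ + ‖g z - mean g x l‖) := by
    rw [meanOsc, meanOsc, setAverage_eq, setAverage_eq, setAverage_eq, integral_add h1 h2,
      smul_add]
  rw [h3]
  refine mul_le_mul_of_nonneg_left (average_mono (integrableOn_norm_sub hf _ x hl) (h1.add h2)
    fun z => ?_) zero_le_two
  have e : f z - (mean (f - g) x l + mean g x l)
      = ((f - g) z - mean (f - g) x l) + (g z - mean g x l) := by
    simp only [Pi.sub_apply]; ring
  rw [e]
  exact norm_add_le _ _

/-- Smooth compactly supported functions satisfy the three vanishing conditions. -/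
lemma vanishing_of_smooth {α : ℝ} (hα0 : 0 < α) (hα1 : α < 1)
    {g : EuclideanSpace ℝ (Fin n) → ℂ} (hg : ContDiff ℝ (⊤ : ℕ∞) g) (hgc : HasCompactSupport g)
    {ε : ℝ} (hε : 0 < ε) :
    (∃ r > (0:ℝ), ∀ x l, 0 < l → l ≤ r → meanOsc g x l ≤ ε * l ^ α) ∧
    (∃ r > (0:ℝ), ∀ x l, r ≤ l → meanOsc g x l ≤ ε * l ^ α) ∧
    (∀ l > (0:ℝ), ∃ R : ℝ, ∀ x, R ≤ ‖x‖ → meanOsc g x l ≤ ε * l ^ α) := by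
  have hgi : LocallyIntegrable g volume := hg.continuous.locallyIntegrable
  have htriv : ∀ᵐ _x : EuclideanSpace ℝ (Fin n), True := Eventually.of_forall fun _ => trivial
  refine ⟨?_, ?_, ?_⟩
  · obtain ⟨K, hK⟩ := hg.lipschitzWith_of_hasCompactSupport hgc (by simp)
    -- `meanOsc g x l ≤ 2 K n l`, and `l = l ^ (1 - α) * l ^ α`
    have ht : Tendsto (fun l : ℝ => 2 * (K * n) * l ^ (1 - α)) (𝓝 0) (𝓝 0) := by
      have := ((Real.continuousAt_rpow_const 0 (1 - α) (Or.inr (by linarith))).tendsto).const_mul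
        (2 * (K * n : ℝ))
      rwa [Real.zero_rpow (by linarith), mul_zero] at this
    obtain ⟨r, hr, hr'⟩ := Metric.eventually_nhds_iff.1 (ht.eventually_le_const hε)
    refine ⟨r / 2, by positivity, fun x l hl hlr => ?_⟩
    have h1 := meanOsc_le_of_ae hgi htriv (c := x) (B := K * (n * l)) hl
      fun y hy z hz _ _ => by
        have := hK.dist_le_mul y z
        rw [dist_eq_norm, dist_eq_norm] at this
        refine this.trans ?_
        gcongr
        exact norm_sub_le_of_mem_cube hy hz
    have h2 := hr' (y := l) (by rw [Real.dist_eq, sub_zero, abs_of_pos hl]; linarith)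
    have h3 : l = l ^ (1 - α) * l ^ α := by
      rw [← Real.rpow_add hl]; simp
    calc _ ≤ _ := h1
      _ = 2 * (K * n) * l := by ring
      _ = 2 * (K * n) * l ^ (1 - α) * l ^ α := by rw [mul_assoc _ (l ^ (1 - α)), ← h3]
      _ ≤ _ := by gcongr
  · obtain ⟨K, hK⟩ := hgc.exists_bound_of_continuous hg.continuous
    obtain ⟨r, hr0, hr⟩ := ((eventually_gt_atTop 0).and
      ((tendsto_rpow_atTop hα0).eventually_ge_atTop (2 * (K + K) / ε))).exists
    rw [div_le_iff₀ hε] at hr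
    refine ⟨r, hr0, fun x l hl => ?_⟩
    have h1 := meanOsc_le_of_ae hgi htriv (c := x) (B := K + K) (hr0.trans_le hl)
      fun y _ z _ _ _ => (norm_sub_le _ _).trans (add_le_add (hK y) (hK z))
    calc _ ≤ _ := h1
      _ ≤ ε * r ^ α := by linarith
      _ ≤ _ := by gcongr
  · intro l hl
    obtain ⟨ρ, hρ⟩ := hgc.isBounded.subset_closedBall 0
    refine ⟨ρ + n * l + 1, fun x hx => ?_⟩
    have hzero : ∀ y ∈ cube x l, g y = 0 := by
      intro y hy
      by_contra hne
      have h1 := hρ (subset_tsupport _ hne)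
      rw [mem_closedBall, dist_zero_right] at h1
      have h2 := norm_sub_le_of_mem_cube (mem_cube_self x hl) hy
      have h3 := norm_sub_norm_le x y
      linarith
    have h1 := meanOsc_le_of_ae hgi htriv (c := x) (B := 0) hl fun y hy z hz _ _ => by
      rw [hzero y hy, hzero z hz]; simp
    refine h1.trans ?_
    simp
    positivity

end VMOApprox

open VMOApprox in
/-- **`CMO^{1,α} = VMO^{1,α}` for `0 < α < 1` (Guo–He–Wu–Yang).** For `β = (1,…,1)`
(ordinary cubes) and `0 < α < 1`, a locally integrable `f` with finite `BMO^{1,α}`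
seminorm belongs to `VMO^{1,α}(ℝⁿ)` if and only if it can be approximated in the
`BMO^{1,α}` seminorm by smooth compactly supported functions. -/
theorem memVMO_iff_approx_smooth_compactly_supported
    (n : ℕ) (hn : 1 ≤ n) (α : ℝ) (hα0 : 0 < α) (hα1 : α < 1)
    (f : EuclideanSpace ℝ (Fin n) → ℂ) (hf : LocallyIntegrable f volume)
    (hfin : ∃ M : ℝ, ∀ Q : BetaCube n (fun _ => 1), osc (fun _ => 1) α f Q ≤ M) :
    MemVMO (fun _ => (1:ℝ)) α f ↔
      ∀ ε > (0:ℝ), ∃ g : EuclideanSpace ℝ (Fin n) → ℂ,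
        ContDiff ℝ (⊤ : ℕ∞) g ∧ HasCompactSupport g ∧
        ∀ Q : BetaCube n (fun _ => 1), osc (fun _ => 1) α (f - g) Q ≤ ε := by
  constructor
  · rintro ⟨-, -, hi, hii, hiii⟩ ε hε
    obtain ⟨M, hM⟩ := hfin
    obtain ⟨g, hg, hgc, h⟩ := exists_approx hn hα0 hα1 hf (M := max M 0) (le_max_right _ _)
      (fun x l hl => (osc_le_iff hn α f ⟨x, l, hl⟩ _).1
        ((hM ⟨x, l, hl⟩).trans (le_max_left _ _)))
      (fun ε hε => by
        obtain ⟨r, hr, h⟩ := hi ε hε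
        exact ⟨r, hr, fun x l hl hlr => (osc_le_iff hn α f ⟨x, l, hl⟩ _).1 (h _ hlr)⟩)
      (fun ε hε => by
        obtain ⟨r, hr, h⟩ := hii ε hε
        exact ⟨r, hr, fun x l hlr =>
          (osc_le_iff hn α f ⟨x, l, hr.trans_le hlr⟩ _).1 (h _ hlr)⟩)
      (fun l hl ε hε => by
        obtain ⟨R, h⟩ := hiii ⟨0, l, hl⟩ ε hε
        refine ⟨R, fun x hx => ?_⟩
        simpa [BetaCube.translate] using (osc_le_iff hn α f _ _).1 (h x hx))
      hε
    exact ⟨g, hg, hgc, fun Q => (osc_le_iff hn α _ Q ε).2 (h Q.c Q.l Q.l_pos)⟩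
  · intro happ
    -- Each condition for `f` follows from that for an `ε / 4`-approximation `g`.
    have hstep : ∀ ε > (0:ℝ), ∃ g : EuclideanSpace ℝ (Fin n) → ℂ,
        ContDiff ℝ (⊤ : ℕ∞) g ∧ HasCompactSupport g ∧
        ∀ Q : BetaCube n (fun _ => 1), meanOsc g Q.c Q.l ≤ ε / 4 * Q.l ^ α →
          osc (fun _ => 1) α f Q ≤ ε := by
      intro ε hε
      obtain ⟨g, hg, hgc, h⟩ := happ (ε / 4) (by positivity)
      refine ⟨g, hg, hgc, fun Q hQ => ?_⟩
      rw [osc_le_iff hn]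
      have h1 := (osc_le_iff hn α _ Q _).1 (h Q)
      have h2 := meanOsc_le_add hf hg.continuous.locallyIntegrable Q.c Q.l_pos
      linarith
    refine ⟨hf, hfin, fun ε hε => ?_, fun ε hε => ?_, fun Q ε hε => ?_⟩
    · obtain ⟨g, hg, hgc, h⟩ := hstep ε hε
      obtain ⟨⟨r, hr, hv⟩, -, -⟩ :=
        vanishing_of_smooth hα0 hα1 hg hgc (by positivity : 0 < ε / 4)
      exact ⟨r, hr, fun Q hQ => h Q (hv _ _ Q.l_pos hQ)⟩
    · obtain ⟨g, hg, hgc, h⟩ := hstep ε hε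
      obtain ⟨-, ⟨r, hr, hv⟩, -⟩ :=
        vanishing_of_smooth hα0 hα1 hg hgc (by positivity : 0 < ε / 4)
      exact ⟨r, hr, fun Q hQ => h Q (hv _ _ hQ)⟩
    · obtain ⟨g, hg, hgc, h⟩ := hstep ε hε
      obtain ⟨-, -, hv⟩ := vanishing_of_smooth hα0 hα1 hg hgc (by positivity : 0 < ε / 4)
      obtain ⟨R, hR⟩ := hv Q.l Q.l_pos
      refine ⟨R + ‖Q.c‖, fun x hx => h _ (hR _ ?_)⟩
      have := norm_sub_norm_le x (-Q.c)
      rw [norm_neg, sub_neg_eq_add, add_comm x] at this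
      change R ≤ ‖Q.c + x‖
      linarith

end
end

section
/- Let n≥1, β=(1,…,1) and α≥1. If a locally integrable b:ℝ^n→ℂ satisfies ‖b‖_{BMO^{1,α}}<∞ and lim_{r→0} sup{O^{1,α}(b;Q): Q an axis-parallel cube with ℓ(Q)≤r}=0, then b agrees almost everywhere with a constant. In particular, for α≥1 the class VMO^{1,α}(ℝ^n) consists exactly of the a.e. constant functions. -/
/-!
Since `α ≥ 1`, at scales `ℓ ≤ 1` the hypothesis says that the mean oscillation of `b` over a cube
of side `ℓ` is `o(ℓ)`, uniformly in the cube. For two fixed points `x`, `y`, compare the averages of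
`b` over the cubes of side `ℓ` centred at `x` and `y` through a chain of about `|x - y| / ℓ` cubes
of the same side, each shifted from its predecessor by at most half a side. Neighbouring averages
differ by `o(ℓ)`, because both cubes lie in a common cube of side `2ℓ` (`dist_average_le`), so the
two averages differ by `o(1)` (`dist_average_chain`). By the Lebesgue differentiation theorem they
tend to `b x` and `b y` for almost every `x` and `y`, hence `b` is almost everywhere constant.

Cubes are closed balls for the sup norm, so the argument is carried out for closed balls in a
finite-dimensional normed space (`ae_const_of_ball_oscillation`) and then applied to `Fin n → ℝ`
through the volume-preserving identification with `EuclideanSpace ℝ (Fin n)`.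
-/

open MeasureTheory

noncomputable section

section Balls

open Metric Module Filter Topology

variable {E : Type*} [NormedAddCommGroup E] [NormedSpace ℝ E] [FiniteDimensional ℝ E]
  [MeasurableSpace E] [BorelSpace E] {μ : Measure E} [μ.IsAddHaarMeasure]

lemma norm_average_sub_le {f : E → ℂ} (hf : LocallyIntegrable f μ) {x y : E} {ρ : ℝ} (hρ : 0 < ρ)
    (hsub : closedBall y ρ ⊆ closedBall x (2 * ρ)) (c : ℂ) :
    ‖(⨍ z in closedBall y ρ, f z ∂μ) - c‖
      ≤ 2 ^ finrank ℝ E * ⨍ z in closedBall x (2 * ρ), ‖f z - c‖ ∂μ := by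
  have hint : ∀ (w : E) (s : ℝ), IntegrableOn f (closedBall w s) μ := fun w s =>
    hf.integrableOn_isCompact (isCompact_closedBall w s)
  have hc : ∀ (w : E) (s : ℝ), IntegrableOn (fun z => f z - c) (closedBall w s) μ := fun w s =>
    (hint w s).sub (integrableOn_const measure_closedBall_lt_top.ne)
  have hV : 0 < μ.real (closedBall y ρ) :=
    ENNReal.toReal_pos (measure_closedBall_pos μ y hρ).ne' measure_closedBall_lt_top.ne
  have hratio : μ.real (closedBall x (2 * ρ)) = 2 ^ finrank ℝ E * μ.real (closedBall y ρ) := by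
    rw [Measure.addHaar_real_closedBall μ x (by positivity),
      Measure.addHaar_real_closedBall μ y hρ.le, mul_pow, mul_assoc]
  have hav : (⨍ z in closedBall y ρ, f z ∂μ) - c
      = (μ.real (closedBall y ρ))⁻¹ • ∫ z in closedBall y ρ, (f z - c) ∂μ := by
    rw [integral_sub (hint y ρ) (integrableOn_const measure_closedBall_lt_top.ne),
      setIntegral_const, smul_sub, smul_smul, inv_mul_cancel₀ hV.ne', one_smul, setAverage_eq]
  rw [hav, norm_smul, norm_inv, Real.norm_of_nonneg hV.le, setAverage_eq, hratio, smul_eq_mul]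
  have h1 : ‖∫ z in closedBall y ρ, (f z - c) ∂μ‖ ≤ ∫ z in closedBall x (2 * ρ), ‖f z - c‖ ∂μ :=
    (norm_integral_le_integral_norm _).trans
      (setIntegral_mono_set (hc x (2 * ρ)).norm (ae_of_all _ fun _ => norm_nonneg _)
        hsub.eventuallyLE)
  have h2 : (2 : ℝ) ^ finrank ℝ E * ((2 ^ finrank ℝ E * μ.real (closedBall y ρ))⁻¹ *
      ∫ z in closedBall x (2 * ρ), ‖f z - c‖ ∂μ)
      = (μ.real (closedBall y ρ))⁻¹ * ∫ z in closedBall x (2 * ρ), ‖f z - c‖ ∂μ := by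
    field_simp
  rw [h2]
  gcongr

/-- Averages over two balls of radius `ρ` whose centres are at distance at most `ρ` are controlled
by the mean oscillation over a ball of radius `2 * ρ` containing both. -/
lemma dist_average_le {f : E → ℂ} (hf : LocallyIntegrable f μ) {x y : E} {ρ : ℝ} (hρ : 0 < ρ)
    (hxy : dist x y ≤ ρ) :
    dist (⨍ z in closedBall x ρ, f z ∂μ) (⨍ z in closedBall y ρ, f z ∂μ)
      ≤ 2 * 2 ^ finrank ℝ E * ⨍ z in closedBall x (2 * ρ),
        ‖f z - ⨍ w in closedBall x (2 * ρ), f w ∂μ‖ ∂μ := by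
  have h1 := norm_average_sub_le hf (x := x) (y := x) hρ
    (closedBall_subset_closedBall (by linarith)) (⨍ w in closedBall x (2 * ρ), f w ∂μ)
  have h2 := norm_average_sub_le hf (x := x) (y := y) hρ
    (closedBall_subset_closedBall' (by rw [dist_comm y x]; linarith))
    (⨍ w in closedBall x (2 * ρ), f w ∂μ)
  rw [← dist_eq_norm] at h1 h2
  refine (dist_triangle_right _ _ (⨍ w in closedBall x (2 * ρ), f w ∂μ)).trans ?_
  linarith

/-- Joining `x` to `y` by `N` steps of length at most `D / N` turns an oscillation bound `ε * ρ` at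
scale `ρ = D / N` into a bound independent of `N`. -/
lemma dist_average_chain {f : E → ℂ} (hf : LocallyIntegrable f μ) {ε r : ℝ}
    (h : ∀ (x : E) (ρ : ℝ), 0 < ρ → ρ ≤ r →
      ⨍ z in closedBall x ρ, ‖f z - ⨍ w in closedBall x ρ, f w ∂μ‖ ∂μ ≤ ε * ρ)
    {x y : E} {D : ℝ} (hD : 0 < D) (hxy : dist x y ≤ D) {N : ℕ} (hN : 0 < N)
    (hr : 2 * (D / N) ≤ r) :
    dist (⨍ z in closedBall x (D / N), f z ∂μ) (⨍ z in closedBall y (D / N), f z ∂μ)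
      ≤ 4 * 2 ^ finrank ℝ E * D * ε := by
  have hN' : (0 : ℝ) < N := by exact_mod_cast hN
  have hρ : 0 < D / N := by positivity
  let p : ℕ → E := fun k => x + ((k : ℝ) / N) • (y - x)
  have hstep : ∀ k, dist (p k) (p (k + 1)) ≤ D / N := by
    intro k
    have : p k - p (k + 1) = (1 / N : ℝ) • (x - y) := by
      simp only [p]
      push_cast
      module
    rw [dist_eq_norm, this, norm_smul, ← dist_eq_norm, Real.norm_of_nonneg (by positivity),
      one_div_mul_eq_div]
    gcongr
  have key := dist_le_range_sum_of_dist_le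
    (f := fun k => ⨍ z in closedBall (p k) (D / N), f z ∂μ) N
    (d := fun _ => 2 * 2 ^ finrank ℝ E * (ε * (2 * (D / N)))) (by
      intro k _
      refine (dist_average_le hf hρ (hstep k)).trans ?_
      gcongr
      exact h _ _ (by positivity) hr)
  have h0 : p 0 = x := by simp [p]
  have h1 : p N = y := by simp [p, div_self hN'.ne']
  simp only [h0, h1, Finset.sum_const, Finset.card_range, nsmul_eq_mul] at key
  refine key.trans_eq ?_
  field_simp
  ring

/-- A locally integrable function whose mean oscillation over balls of radius `ρ` is `o(ρ)`,
uniformly in the centre, is almost everywhere constant. -/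
theorem ae_const_of_ball_oscillation {f : E → ℂ} (hf : LocallyIntegrable f μ)
    (h : ∀ ε > (0 : ℝ), ∃ r > (0 : ℝ), ∀ (x : E) (ρ : ℝ), 0 < ρ → ρ ≤ r →
      ⨍ z in closedBall x ρ, ‖f z - ⨍ w in closedBall x ρ, f w ∂μ‖ ∂μ ≤ ε * ρ) :
    ∃ c : ℂ, f =ᵐ[μ] fun _ => c := by
  have hL : ∀ᵐ x ∂μ, ∀ D : ℝ, 0 < D →
      Tendsto (fun N : ℕ => ⨍ z in closedBall x (D / N), f z ∂μ) atTop (𝓝 (f x)) := by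
    filter_upwards [IsUnifLocDoublingMeasure.ae_tendsto_average (μ := μ) hf 1] with x hx D hD
    refine hx (fun _ => x) (fun N : ℕ => D / N) ?_ ?_
    · refine tendsto_nhdsWithin_iff.2 ⟨tendsto_const_div_atTop_nhds_zero_nat D, ?_⟩
      filter_upwards [eventually_gt_atTop 0] with N hN
      have : (0 : ℝ) < N := by exact_mod_cast hN
      exact div_pos hD this
    · exact Eventually.of_forall fun N => mem_closedBall_self (by positivity)
  obtain ⟨x₀, hx₀⟩ := hL.exists
  refine ⟨f x₀, ?_⟩
  filter_upwards [hL] with x hx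
  have hD : 0 < dist x x₀ + 1 := by positivity
  set D := dist x x₀ + 1 with hDdef
  have hlim := (hx D hD).dist (hx₀ D hD)
  have hbound : ∀ ε > (0 : ℝ), dist (f x) (f x₀) ≤ 4 * 2 ^ finrank ℝ E * D * ε := by
    intro ε hε
    obtain ⟨r, hr, hε'⟩ := h ε hε
    refine le_of_tendsto hlim ?_
    have hsc : ∀ᶠ N : ℕ in atTop, D / N < r / 2 :=
      (tendsto_const_div_atTop_nhds_zero_nat D).eventually_lt_const (by positivity)
    filter_upwards [eventually_gt_atTop 0, hsc] with N hN hNr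
    exact dist_average_chain hf hε' hD (by linarith) hN (by linarith)
  refine dist_le_zero.1 (le_of_forall_pos_le_add fun δ hδ => ?_)
  refine (hbound (δ / (4 * 2 ^ finrank ℝ E * D)) (by positivity)).trans_eq ?_
  field_simp
  ring

end Balls

lemma setAverage_comp_toLp {n : ℕ} {F : Type*} [NormedAddCommGroup F] [NormedSpace ℝ F]
    (g : EuclideanSpace ℝ (Fin n) → F) (s : Set (EuclideanSpace ℝ (Fin n))) :
    ⨍ z in (WithLp.toLp 2 : (Fin n → ℝ) → EuclideanSpace ℝ (Fin n)) ⁻¹' s, g (WithLp.toLp 2 z)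
      = ⨍ x in s, g x := by
  have hp := PiLp.volume_preserving_toLp (Fin n)
  have he := (MeasurableEquiv.toLp 2 (Fin n → ℝ)).measurableEmbedding
  rw [setAverage_eq, setAverage_eq, hp.setIntegral_preimage_emb he, measureReal_def,
    measureReal_def, hp.measure_preimage_emb he]

lemma locallyIntegrable_comp_toLp {n : ℕ} {b : EuclideanSpace ℝ (Fin n) → ℂ}
    (hb : LocallyIntegrable b volume) :
    LocallyIntegrable (fun z : Fin n → ℝ => b (WithLp.toLp 2 z)) volume := by
  have hp := PiLp.volume_preserving_toLp (Fin n)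
  have he := (MeasurableEquiv.toLp 2 (Fin n → ℝ)).measurableEmbedding
  rw [locallyIntegrable_iff]
  intro K hK
  have hK' := hK.image (PiLp.continuous_toLp 2 (fun _ : Fin n => ℝ))
  have := (hp.integrableOn_comp_preimage he).2 (hb.integrableOn_isCompact hK')
  rwa [Set.preimage_image_eq _ (WithLp.toLp_injective 2)] at this

/-- The cube of side `2 * ρ` centred at `x`, seen in `Fin n → ℝ`, is the sup-norm ball of
radius `ρ`. -/
lemma preimage_cube_eq_closedBall {n : ℕ} (x : Fin n → ℝ) {ρ : ℝ} (hρ : 0 < ρ) :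
    WithLp.toLp 2 ⁻¹' (BetaCube.set (β := fun _ : Fin n => (1 : ℝ))
      ⟨WithLp.toLp 2 x, 2 * ρ, by positivity⟩) = Metric.closedBall x ρ := by
  ext z
  simp [BetaCube.set, dist_pi_le_iff hρ.le, Real.dist_eq]

/-- **For `α ≥ 1` the small-scale vanishing condition forces constancy.** Let
`β = (1,…,1)` and `α ≥ 1`. If a locally integrable `b : ℝⁿ → ℂ` has finite
`BMO^{1,α}` seminorm and its oscillations vanish at small scales, then `b` agrees
almost everywhere with a constant. In particular, for `α ≥ 1` the class
`VMO^{1,α}(ℝⁿ)` consists exactly of the a.e. constant functions. -/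
theorem ae_const_of_vanishing_small_scales
    (n : ℕ) (hn : 1 ≤ n) (α : ℝ) (hα : 1 ≤ α)
    (b : EuclideanSpace ℝ (Fin n) → ℂ) (hb : LocallyIntegrable b volume)
    (hfin : ∃ M : ℝ, ∀ Q : BetaCube n (fun _ => 1), osc (fun _ => 1) α b Q ≤ M)
    (hsmall : ∀ ε > (0:ℝ), ∃ r > (0:ℝ), ∀ Q : BetaCube n (fun _ => 1),
      Q.l ≤ r → osc (fun _ => 1) α b Q ≤ ε) :
    ∃ c : ℂ, b =ᵐ[volume] fun _ => c := by
  have hq := PiLp.volume_preserving_ofLp (Fin n)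
  have hn' : (n : ℝ) ≠ 0 := by positivity
  obtain ⟨c, hc⟩ := ae_const_of_ball_oscillation (locallyIntegrable_comp_toLp hb) (by
    intro ε hε
    obtain ⟨r, hr, H⟩ := hsmall (ε / 2) (by positivity)
    refine ⟨min r 1 / 2, by positivity, fun x ρ hρ hρr => ?_⟩
    have hl : 2 * ρ ≤ min r 1 := by linarith
    have hl0 : 0 < 2 * ρ := by positivity
    have hQ := H ⟨WithLp.toLp 2 x, 2 * ρ, hl0⟩ (hl.trans (min_le_left _ _))
    rw [← preimage_cube_eq_closedBall x hρ,
      setAverage_comp_toLp b, setAverage_comp_toLp (fun w => ‖b w - _‖)]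
    simp only [osc, cubeAvg, Finset.sum_const, Finset.card_univ, Fintype.card_fin, nsmul_eq_mul,
      mul_one] at hQ
    rw [← Real.rpow_mul hl0.le, mul_neg, mul_div_cancel₀ _ hn', Real.rpow_neg hl0.le,
      inv_mul_le_iff₀ (by positivity)] at hQ
    refine hQ.trans ?_
    -- As `2 * ρ ≤ 1` and `α ≥ 1`, the normalising factor `(2 * ρ) ^ α` is at most `2 * ρ`.
    have hpow : (2 * ρ) ^ α ≤ 2 * ρ := by
      simpa using Real.rpow_le_rpow_of_exponent_ge hl0 (hl.trans (min_le_right _ _)) hα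
    calc (2 * ρ) ^ α * (ε / 2) ≤ 2 * ρ * (ε / 2) := by gcongr
      _ = ε * ρ := by ring)
  exact ⟨c, hq.quasiMeasurePreserving.ae hc⟩

end
end
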